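/- Let h be a normal integrand on ℝⁿ and p ∈ N^⊥ such that the normal integrand k(x,ω) := h(x,ω) − x·p(ω) is lower bounded (there is m ∈ L¹(P) with k(x,ω) ≥ −m(ω) for all x a.e.). Then the Bellman equations (BE) have a solution for h if and only if they have a solution for k; in that case the solutions are unique (any two solutions agree, for a.e. ω, at every point) and are related by k_t(x^t,ω) = h_t(x^t,ω) − x^t·(E_t p^t)(ω) for all t, where p^t := (p₀,…,p_t) and E_t p^t denotes the componentwise F_t-conditional expectation of p^t. -/

import Mathlib

/-!
Subtracting a linear term `x·p` commutes with both operations of the Bellman recursion.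

*Conditional expectation.* If `g ≥ x·q - m` with `q`, `m` integrable, and `g'` is a `G`-conditional
expectation of `g`, then `g' - x·E[r|G]` is one of `g - x·r` (`IsCondNI.shift`). Along a bounded
`G`-measurable selection `x` this is linearity of the integral, since `x·r` is integrable and the
negative part of `g(x)` is too. For an unbounded selection the tilted composition may be
quasi-integrable while `g(x)` is not; a general weight is then approximated by weights supported on
`{‖x‖ ≤ j}` (`isCondExpER_of_localized`), where `x` may be truncated.

*Minimization.* For `r ∈ N^⊥` the tower property and `E_t r_t = 0` show that the vectors
`ρ_t = (E_t r_0, …, E_t r_{t-1}, 0, …, 0)` satisfy `ρ_t = E_t ρ_{t+1}` and `ρ_T = E_T r` in the weak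
sense of `IsCondVec`. As `ρ_{t+1}` has no component in the direction of `x_{t+1}`, the infimum over
`x_{t+1}` commutes with subtracting `x·ρ_{t+1}`. Hence `H_t - x·ρ_t` solves the Bellman equations for
`h - x·r` (`IsBellman.tilt`). Existence in both directions follows with `r = p` and `r = -p`.

The lower bound `x·q - m` needed at each stage is itself propagated backwards
(`IsBellman.lower_bound`). For this and for uniqueness, inequalities that hold almost surely along
every selection must be upgraded to hold for all points outside a single null set. The exceptional
set is measurable in the product, so a measurable selection theorem is required
(`ae_forall_notMem_of_selections`). It is proved for the sub-σ-algebra `G` without completeness: a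
product-measurable set is the pullback of a Borel set in a product of Polish spaces; if its
projection, an analytic set, had positive outer measure, it would contain the projection of a compact
subset of that Borel set with positive measure, and compact sets have Borel selections. Uniqueness
together with `IsBellman.tilt` yields the formula relating the two solutions.
-/

open MeasureTheory ENNReal
open scoped RealInnerProductSpace

noncomputable section

namespace PaperDP

variable {Ω : Type*}

def ePos (x : EReal) : ℝ≥0∞ := if x = ⊤ then ⊤ else ENNReal.ofReal x.toReal

def EInt {mΩ : MeasurableSpace Ω} (μ : Measure Ω) (ξ : Ω → EReal) : EReal :=
  if (∫⁻ ω, ePos (ξ ω) ∂μ) = ⊤ then ⊤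
  else ((∫⁻ ω, ePos (ξ ω) ∂μ : ℝ≥0∞) : EReal) - ((∫⁻ ω, ePos (-(ξ ω)) ∂μ : ℝ≥0∞) : EReal)

def QuasiIntegrable {mΩ : MeasurableSpace Ω} (μ : Measure Ω) (ξ : Ω → EReal) : Prop :=
  (∫⁻ ω, ePos (ξ ω) ∂μ) ≠ ⊤ ∨ (∫⁻ ω, ePos (-(ξ ω)) ∂μ) ≠ ⊤

def IsCondExpER {mΩ : MeasurableSpace Ω} (μ : Measure Ω) (G : MeasurableSpace Ω)
    (ξ ξ' : Ω → EReal) : Prop :=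
  Measurable[G] ξ' ∧
  ∀ α : Ω → ℝ, Measurable[G] α → (∀ ω, 0 ≤ α ω) → (∃ C, ∀ ω, α ω ≤ C) →
    EInt μ (fun ω => (α ω : EReal) * ξ' ω) = EInt μ (fun ω => (α ω : EReal) * ξ ω)

def IsNormalIntegrand {E : Type*} [TopologicalSpace E] [MeasurableSpace E]
    (m : MeasurableSpace Ω) (h : E → Ω → EReal) : Prop :=
  Measurable[MeasurableSpace.prod inferInstance m] (fun p : E × Ω => h p.1 p.2) ∧
  (∀ ω, LowerSemicontinuous fun x => h x ω) ∧ ∀ x ω, h x ω ≠ ⊥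

def LBounded {E : Type*} [NormedAddCommGroup E] {mΩ : MeasurableSpace Ω} (μ : Measure Ω)
    (h : E → Ω → EReal) : Prop :=
  ∃ ρ m : Ω → ℝ, Integrable ρ μ ∧ Integrable m μ ∧ (∀ ω, 0 ≤ ρ ω) ∧ (∀ ω, 0 ≤ m ω) ∧
    ∀ᵐ ω ∂μ, ∀ x : E, (↑(-(ρ ω * ‖x‖ + m ω)) : EReal) ≤ h x ω

def IsCondNI {E : Type*} [TopologicalSpace E] [MeasurableSpace E] {mΩ : MeasurableSpace Ω}
    (μ : Measure Ω) (G : MeasurableSpace Ω) (h hG : E → Ω → EReal) : Prop :=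
  IsNormalIntegrand G hG ∧
  ∀ x : Ω → E, Measurable[G] x → QuasiIntegrable μ (fun ω => h (x ω) ω) →
    IsCondExpER μ G (fun ω => h (x ω) ω) (fun ω => hG (x ω) ω)

def recessionFn {E : Type*} [AddCommGroup E] [Module ℝ E] (g : E → EReal) (y : E) : EReal :=
  ⨅ z : {z : E // g z < ⊤}, ⨆ r : {r : ℝ // 0 < r},
    ((r.1⁻¹ : ℝ) : EReal) * (g (z.1 + r.1 • y) - g z.1)

def ConvexEFn {E : Type*} [AddCommGroup E] [Module ℝ E] (g : E → EReal) : Prop :=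
  ∀ x y : E, ∀ a b : ℝ, 0 ≤ a → 0 ≤ b → a + b = 1 →
    g (a • x + b • y) ≤ (a : EReal) * g x + (b : EReal) * g y

def ConvexIntegrand {E : Type*} [AddCommGroup E] [Module ℝ E]
    (h : E → Ω → EReal) : Prop :=
  ∀ ω, ConvexEFn (fun x => h x ω)

/-! ### Multistage setting -/

/-- The space `ℝⁿ = ℝ^{n₀} × ⋯ × ℝ^{n_T}` of deterministic strategies. -/
abbrev Strat (T : ℕ) (nn : ℕ → ℕ) := (t : Fin (T + 1)) → EuclideanSpace ℝ (Fin (nn t.1))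

/-- The scalar product `x · v = Σ_t x_t · v_t` on `Strat T nn`. -/
def sdot {T : ℕ} {nn : ℕ → ℕ} (x v : Strat T nn) : ℝ :=
  ∑ t : Fin (T + 1), ⟪x t, v t⟫

/-- An adapted process: `x_t` is `F_t`-measurable for every `t`. -/
def AdaptedProc (T : ℕ) (nn : ℕ → ℕ)
    (𝓕 : ℕ → MeasurableSpace Ω) (x : Ω → Strat T nn) : Prop :=
  ∀ t : Fin (T + 1), Measurable[𝓕 t.1] fun ω => x ω t

/-- `v ∈ N^⊥`: `v` is integrable and `E[x·v] = 0` for every bounded adapted `x`. -/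
def InNperp {mΩ : MeasurableSpace Ω} (μ : Measure Ω) (T : ℕ) (nn : ℕ → ℕ)
    (𝓕 : ℕ → MeasurableSpace Ω) (v : Ω → Strat T nn) : Prop :=
  Integrable v μ ∧
  ∀ x : Ω → Strat T nn, AdaptedProc T nn 𝓕 x → (∃ C, ∀ ω, ‖x ω‖ ≤ C) →
    ∫ ω, sdot (x ω) (v ω) ∂μ = 0

/-- `(H t)_{t ≤ T}` solves the Bellman equations (BE) for `h`:  each `H t` depends only on
the coordinates `x₀,…,x_t`; `H T` is an `F_T`-conditional expectation of `h`; and there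
are normal integrands `Ht t` with `Ht t = inf over `x_{t+1}` of `H (t+1)` and `H t` an
`F_t`-conditional expectation of `Ht t`. -/
def IsBellman {mΩ : MeasurableSpace Ω} (μ : Measure Ω) (T : ℕ) (nn : ℕ → ℕ)
    (𝓕 : ℕ → MeasurableSpace Ω) (h : Strat T nn → Ω → EReal)
    (H : ℕ → Strat T nn → Ω → EReal) : Prop :=
  (∀ t : ℕ, t ≤ T → ∀ x y : Strat T nn, ∀ ω : Ω,
      (∀ s : Fin (T + 1), s.1 ≤ t → x s = y s) → H t x ω = H t y ω) ∧
  IsCondNI μ (𝓕 T) h (H T) ∧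
  ∃ Ht : ℕ → Strat T nn → Ω → EReal, ∀ t : ℕ, (ht : t < T) →
    IsNormalIntegrand mΩ (Ht t) ∧
    (∀ (x : Strat T nn) (ω : Ω),
      Ht t x ω = ⨅ ξ : EuclideanSpace ℝ (Fin (nn (t + 1))),
        H (t + 1) (Function.update x ⟨t + 1, by omega⟩ ξ) ω) ∧
    IsCondNI μ (𝓕 t) (Ht t) (H t)

/-- The set `N_t(ω)` associated with a Bellman solution. -/
def Nset {T : ℕ} {nn : ℕ → ℕ} (H : ℕ → Strat T nn → Ω → EReal) (t : Fin (T + 1))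
    (ω : Ω) : Set (EuclideanSpace ℝ (Fin (nn t.1))) :=
  {ξ | recessionFn (fun z => H t.1 z ω) (Function.update 0 t ξ) ≤ 0}

/-- The optimum value of the stochastic optimization problem (SP). -/
def SPval {mΩ : MeasurableSpace Ω} (μ : Measure Ω) (T : ℕ) (nn : ℕ → ℕ)
    (𝓕 : ℕ → MeasurableSpace Ω) (h : Strat T nn → Ω → EReal) : EReal :=
  ⨅ x : {x : Ω → Strat T nn // AdaptedProc T nn 𝓕 x}, EInt μ (fun ω => h (x.1 ω) ω)

/-- `xbar` solves (SP): it is adapted and minimizes the objective over adapted processes. -/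
def Solves {mΩ : MeasurableSpace Ω} (μ : Measure Ω) (T : ℕ) (nn : ℕ → ℕ)
    (𝓕 : ℕ → MeasurableSpace Ω) (h : Strat T nn → Ω → EReal) (xbar : Ω → Strat T nn) : Prop :=
  AdaptedProc T nn 𝓕 xbar ∧
  ∀ x : Ω → Strat T nn, AdaptedProc T nn 𝓕 x →
    EInt μ (fun ω => h (xbar ω) ω) ≤ EInt μ (fun ω => h (x ω) ω)

/-! ### Selections of measurable sets -/

section Selection

/-- A product-measurable set depends on the abstract coordinate `ω` only through a measurable map
`c` into the Cantor space, so it is the pullback of a Borel set. This lets descriptive set theory be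
used over an arbitrary probability space. -/
theorem exists_code {E : Type*} [MeasurableSpace E] [MeasurableSpace Ω]
    {D : Set (E × Ω)} (hD : MeasurableSet D) :
    ∃ (c : Ω → (ℕ → Bool)) (D' : Set (E × (ℕ → Bool))), Measurable c ∧ MeasurableSet D' ∧
      D = (Prod.map id c) ⁻¹' D' := by
  classical
  induction D, hD using MeasurableSpace.induction_on_inter generateFrom_prod.symm isPiSystem_prod with
  | empty => exact ⟨fun _ _ => false, ∅, measurable_const, MeasurableSet.empty, by simp⟩
  | basic t ht =>
    obtain ⟨A, hA, B, hB, rfl⟩ := ht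
    refine ⟨fun ω _ => decide (ω ∈ B), A ×ˢ {y | y 0 = true}, ?_, ?_, ?_⟩
    · refine measurable_pi_lambda _ fun _ => ?_
      exact measurable_to_bool (by
        have : ((fun ω => decide (ω ∈ B)) ⁻¹' {true}) = B := by ext; simp
        rw [this]; exact hB)
    · exact MeasurableSet.prod hA (measurableSet_eq_fun (measurable_pi_apply 0) measurable_const)
    · ext ⟨x, ω⟩; simp
  | compl t ht ih =>
    obtain ⟨c, D', hc, hD', rfl⟩ := ih
    exact ⟨c, D'ᶜ, hc, hD'.compl, rfl⟩
  | iUnion f hd hf ih =>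
    choose c D' hc hD' h using ih
    refine ⟨fun ω k => c k.unpair.1 ω k.unpair.2,
      ⋃ i, (Prod.map id (fun (y : ℕ → Bool) j => y (Nat.pair i j))) ⁻¹' (D' i), ?_, ?_, ?_⟩
    · exact measurable_pi_lambda _ fun k => (measurable_pi_apply _).comp (hc _)
    · refine MeasurableSet.iUnion fun i => ?_
      refine (measurable_id.prodMap ?_) (hD' i)
      exact measurable_pi_lambda _ fun k => measurable_pi_apply _
    · rw [Set.preimage_iUnion]
      refine Set.iUnion_congr fun i => ?_
      rw [h i]
      ext ⟨x, ω⟩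
      simp

/-- A neighbourhood of a compact subset of Baire space contains all sequences that agree with a
point of it up to some uniform index. -/
theorem exists_cylinder_subset {C V : Set (ℕ → ℕ)} (hC : IsCompact C) (hV : IsOpen V)
    (hCV : C ⊆ V) : ∃ k : ℕ, ∀ x ∈ C, ∀ y : ℕ → ℕ, (∀ i < k, y i = x i) → y ∈ V := by
  refine hC.induction_on (p := fun S => ∃ k : ℕ, ∀ x ∈ S, ∀ y : ℕ → ℕ,
    (∀ i < k, y i = x i) → y ∈ V) ⟨0, by simp⟩ ?_ ?_ ?_
  · rintro s t hst ⟨k, hk⟩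
    exact ⟨k, fun x hx => hk x (hst hx)⟩
  · rintro s t ⟨k, hk⟩ ⟨l, hl⟩
    refine ⟨max k l, ?_⟩
    rintro x (hx | hx) y hy
    · exact hk x hx y fun i hi => hy i (lt_max_of_lt_left hi)
    · exact hl x hx y fun i hi => hy i (lt_max_of_lt_right hi)
  · intro x hx
    obtain ⟨U, ⟨z, k, rfl⟩, hxU, hUV⟩ := (PiNat.isTopologicalBasis_cylinders (fun _ : ℕ => ℕ)).mem_nhds_iff.1
      (hV.mem_nhds (hCV hx))
    refine ⟨PiNat.cylinder z k, mem_nhdsWithin_of_mem_nhds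
      ((PiNat.isOpen_cylinder _ z k).mem_nhds hxU), k, fun u hu y hy => hUV ?_⟩
    intro i hi
    rw [hy i hi]; exact hu i hi

/-- An analytic set of positive outer measure contains a compact set of positive measure
(the capacitability argument), in the form needed for continuous images of Baire space. -/
theorem exists_isCompact_measure_image_ne_zero {Y : Type*} [TopologicalSpace Y]
    [TopologicalSpace.PseudoMetrizableSpace Y] [MeasurableSpace Y] [BorelSpace Y]
    (ν : Measure Y) [IsFiniteMeasure ν] {f : (ℕ → ℕ) → Y} (hf : Continuous f)
    (h0 : ν (Set.range f) ≠ 0) : ∃ C : Set (ℕ → ℕ), IsCompact C ∧ ν (f '' C) ≠ 0 := by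
  obtain ⟨ε, hε0, hε⟩ := exists_between (pos_iff_ne_zero.2 h0)
  have step : ∀ (k : ℕ) (A : {A : Set (ℕ → ℕ) // ε < ν (f '' A)}), ∃ N : ℕ,
      ε < ν (f '' (A.1 ∩ {x | x k ≤ N})) := by
    rintro k ⟨A, hA⟩
    have hmon : Monotone fun N : ℕ => f '' (A ∩ {x | x k ≤ N}) := fun a b hab =>
      Set.image_mono (Set.inter_subset_inter_right _ fun x (hx : x k ≤ a) => hx.trans hab)
    have hU : (⋃ N : ℕ, f '' (A ∩ {x | x k ≤ N})) = f '' A := by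
      rw [← Set.image_iUnion, ← Set.inter_iUnion]
      congr 1
      ext x
      simp only [Set.mem_inter_iff, Set.mem_iUnion, Set.mem_ofPred_eq, and_iff_left_iff_imp]
      exact fun _ => ⟨x k, le_rfl⟩
    rw [← hU, hmon.measure_iUnion, lt_iSup_iff] at hA
    exact hA
  choose N hN using step
  -- Bound the coordinates one after another, keeping the measure of the image above `ε`.
  let A : ℕ → {A : Set (ℕ → ℕ) // ε < ν (f '' A)} := fun k => Nat.rec
    ⟨Set.univ, by rwa [Set.image_univ]⟩ (fun k A => ⟨A.1 ∩ {x | x k ≤ N k A}, hN k A⟩) k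
  let M : ℕ → ℕ := fun k => N k (A k)
  have hA : ∀ k, (A k).1 = {x | ∀ i < k, x i ≤ M i} := by
    intro k
    induction k with
    | zero => simp [A]
    | succ k ih =>
      have : (A (k + 1)).1 = (A k).1 ∩ {x | x k ≤ M k} := rfl
      rw [this, ih]
      ext x
      simp only [Set.mem_inter_iff, Set.mem_ofPred_eq, Nat.lt_succ_iff_lt_or_eq]
      constructor
      · rintro ⟨h1, h2⟩ i (hi | rfl)
        exacts [h1 i hi, h2]
      · exact fun h => ⟨fun i hi => h i (Or.inl hi), h k (Or.inr rfl)⟩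
  let C : Set (ℕ → ℕ) := Set.pi Set.univ fun i => Set.Iic (M i)
  have hC : IsCompact C := isCompact_univ_pi fun i => (Set.finite_Iic _).isCompact
  refine ⟨C, hC, fun h => ?_⟩
  obtain ⟨U, hCU, hU, hUε⟩ := Set.exists_isOpen_lt_of_lt (f '' C) ε (h ▸ hε0)
  obtain ⟨k, hk⟩ := exists_cylinder_subset hC (hU.preimage hf) (Set.image_subset_iff.1 hCU)
  refine (hUε.trans (A k).2).not_ge (measure_mono (Set.image_subset_iff.2 fun x hx => ?_))
  rw [hA] at hx
  refine hk (fun i => if i < k then x i else 0) ?_ x fun i hi => by simp [hi]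
  intro i _
  by_cases hi : i < k
  · simpa [hi] using hx i hi
  · simp [hi]

/-- A compact subset of a product has a Borel selection: pull `K` back to the Cantor set and pick
the least parameter in each fibre. -/
theorem exists_measurable_selection_of_isCompact {E Y : Type*} [TopologicalSpace E]
    [TopologicalSpace.MetrizableSpace E]
    [MeasurableSpace E] [BorelSpace E] [TopologicalSpace Y] [TopologicalSpace.MetrizableSpace Y]
    [MeasurableSpace Y] [BorelSpace Y] {K : Set (E × Y)} (hK : IsCompact K) (hne : K.Nonempty) :
    ∃ s : Y → E, Measurable s ∧ (∀ y, s y ∈ Prod.fst '' K) ∧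
      ∀ y ∈ Prod.snd '' K, (s y, y) ∈ K := by
  let _ : MetricSpace K := TopologicalSpace.metrizableSpaceMetric K
  have : CompactSpace K := isCompact_iff_compactSpace.1 hK
  have : Nonempty K := hne.to_subtype
  have : CompactSpace cantorSet := isCompact_iff_compactSpace.1 isCompact_cantorSet
  obtain ⟨g, hg, hgs⟩ := exists_nat_bool_continuous_surjective_of_compact K
  let φ : cantorSet → E × Y := fun r => (g (cantorSetHomeomorphNatToBool r)).1
  have hφ : Continuous φ :=
    continuous_subtype_val.comp (hg.comp cantorSetHomeomorphNatToBool.continuous)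
  have hφK : ∀ r, φ r ∈ K := fun r => Subtype.coe_prop _
  have hφs : ∀ z ∈ K, ∃ r, φ r = z := fun z hz => by
    obtain ⟨b, hb⟩ := hgs ⟨z, hz⟩
    exact ⟨cantorSetHomeomorphNatToBool.symm b, by simp [φ, hb]⟩
  let S : Y → Set ℝ := fun y => Subtype.val '' {r : cantorSet | (φ r).2 = y}
  have hS : ∀ y, IsCompact (S y) := fun y =>
    ((isClosed_eq (continuous_snd.comp hφ) continuous_const).isCompact).image
      continuous_subtype_val
  have hSne : ∀ y ∈ Prod.snd '' K, (S y).Nonempty := by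
    rintro _ ⟨z, hz, rfl⟩
    obtain ⟨r, rfl⟩ := hφs z hz
    exact ⟨r, r, rfl, rfl⟩
  have hSe : ∀ y ∉ Prod.snd '' K, S y = ∅ := by
    intro y hy
    rw [Set.eq_empty_iff_forall_notMem]
    rintro _ ⟨r, hr, rfl⟩
    exact hy ⟨φ r, hφK r, hr⟩
  have hmem : ∀ y ∈ Prod.snd '' K, sInf (S y) ∈ S y := fun y hy => (hS y).sInf_mem (hSne y hy)
  have hcan : ∀ y, sInf (S y) ∈ cantorSet := by
    intro y
    by_cases hy : y ∈ Prod.snd '' K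
    · obtain ⟨r, _, hr⟩ := hmem y hy
      rw [← hr]; exact r.2
    · rw [hSe y hy, Real.sInf_empty]; exact zero_mem_cantorSet
  have hσ : Measurable fun y => sInf (S y) := by
    refine measurable_of_Iic fun c => ?_
    have hcl : IsClosed (Prod.snd '' K) := (hK.image continuous_snd).isClosed
    have hcl2 : IsClosed ((fun r => (φ r).2) '' {r : cantorSet | (r : ℝ) ≤ c}) :=
      (((isClosed_le continuous_subtype_val continuous_const).isCompact).image
        (continuous_snd.comp hφ)).isClosed
    have : (fun y => sInf (S y)) ⁻¹' Set.Iic c =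
        ((fun r => (φ r).2) '' {r : cantorSet | (r : ℝ) ≤ c}) ∪
          ((Prod.snd '' K)ᶜ ∩ {_y | 0 ≤ c}) := by
      ext y
      simp only [Set.mem_preimage, Set.mem_Iic, Set.mem_union]
      by_cases hy : y ∈ Prod.snd '' K
      · have : y ∉ ((Prod.snd '' K)ᶜ ∩ {_y | 0 ≤ c}) := fun h => h.1 hy
        simp only [this, or_false]
        constructor
        · intro h
          obtain ⟨r, hr, hr'⟩ := hmem y hy
          exact ⟨r, by rw [← hr'] at h; exact h, hr⟩
        · rintro ⟨r, hr, hr'⟩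
          exact (csInf_le (hS y).bddBelow ⟨r, hr', rfl⟩).trans hr
      · have : y ∉ ((fun r => (φ r).2) '' {r : cantorSet | (r : ℝ) ≤ c}) := by
          rintro ⟨r, _, hr'⟩
          exact hy ⟨φ r, hφK r, hr'⟩
        simp only [this, false_or, hSe y hy, Real.sInf_empty]
        exact ⟨fun h => ⟨hy, h⟩, fun h => h.2⟩
    rw [this]
    exact hcl2.measurableSet.union (hcl.measurableSet.compl.inter (MeasurableSet.const _))
  refine ⟨fun y => (φ ⟨sInf (S y), hcan y⟩).1, ?_, ?_, ?_⟩
  · exact (continuous_fst.comp hφ).measurable.comp (hσ.subtype_mk)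
  · exact fun y => ⟨_, hφK _, rfl⟩
  · intro y hy
    obtain ⟨r, hr, hr'⟩ := hmem y hy
    have : (φ ⟨sInf (S y), hcan y⟩).2 = y := by
      have h3 : (⟨sInf (S y), hcan y⟩ : cantorSet) = r := Subtype.ext hr'.symm
      rw [h3]; exact hr
    have h2 := hφK ⟨sInf (S y), hcan y⟩
    rwa [← Prod.mk.eta (p := φ ⟨sInf (S y), hcan y⟩), this] at h2

/-- A measurable set missed almost surely by every measurable relatively compact selection has
negligible projection. The projection need not be measurable; the conclusion is about outer measure. -/
theorem ae_forall_notMem_of_selections {E : Type*} [TopologicalSpace E] [PolishSpace E]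
    [MeasurableSpace E] [BorelSpace E] [MeasurableSpace Ω] (μ : Measure Ω) [IsFiniteMeasure μ]
    {D : Set (E × Ω)} (hD : MeasurableSet D)
    (hsel : ∀ x : Ω → E, Measurable x → (∃ L, IsCompact L ∧ ∀ ω, x ω ∈ L) →
      ∀ᵐ ω ∂μ, (x ω, ω) ∉ D) :
    ∀ᵐ ω ∂μ, ∀ x, (x, ω) ∉ D := by
  obtain ⟨c, D', hc, hD', rfl⟩ := exists_code hD
  suffices h : μ.map c (Prod.snd '' D') = 0 by
    refine measure_mono_null ?_ (hc.measurePreserving μ |>.quasiMeasurePreserving.preimage_null h)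
    intro ω hω
    simp only [Set.mem_preimage, Set.mem_compl_iff, Set.mem_ofPred_eq, not_forall, not_not] at hω
    obtain ⟨x, hx⟩ := hω
    exact ⟨_, hx, rfl⟩
  by_contra h
  have hane : D'.Nonempty := by
    rw [Set.nonempty_iff_ne_empty]; rintro rfl; simp at h
  have : PolishSpace (ℕ → Bool) := PolishSpace.mk
  have h'' := hD'.analyticSet
  rw [AnalyticSet] at h''
  rcases h'' with h' | ⟨f, hf, rfl⟩
  · exact hane.ne_empty h'
  rw [← Set.range_comp] at h
  obtain ⟨C, hC, hC0⟩ := exists_isCompact_measure_image_ne_zero (μ.map c)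
    (continuous_snd.comp hf) h
  rw [Set.image_comp] at hC0
  have hK : IsCompact (f '' C) := hC.image hf
  have hKne : (f '' C).Nonempty := by
    rw [Set.nonempty_iff_ne_empty]; intro h; rw [h] at hC0; simp at hC0
  obtain ⟨s, hs, hsK, hsel'⟩ := exists_measurable_selection_of_isCompact hK hKne
  have h1 := hsel (s ∘ c) (hs.comp hc) ⟨_, hK.image continuous_fst, fun ω => hsK _⟩
  apply hC0
  rw [Measure.map_apply hc (hK.image continuous_snd).isClosed.measurableSet]
  refine measure_mono_null ?_ h1
  intro ω hω
  have := hsel' _ hω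
  simp only [Set.mem_compl_iff, Set.mem_ofPred_eq, not_not]
  exact Set.image_subset_range _ _ this

end Selection

/-! ### The extended integral -/

section ExtendedIntegral

theorem ePos_eq (x : EReal) : ePos x = x.toENNReal := rfl

theorem measurable_ePos : Measurable ePos := measurable_ereal_toENNReal

theorem ePos_mono {x y : EReal} (h : x ≤ y) : ePos x ≤ ePos y := EReal.toENNReal_le_toENNReal h

theorem ePos_coe (a : ℝ) : ePos (a : EReal) = ENNReal.ofReal a := rfl

theorem ePos_eq_zero {x : EReal} : ePos x = 0 ↔ x ≤ 0 := EReal.toENNReal_eq_zero_iff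

theorem ePos_coe_mul {a : ℝ} (ha : 0 ≤ a) (x : EReal) :
    ePos ((a : EReal) * x) = ENNReal.ofReal a * ePos x :=
  EReal.toENNReal_mul (by exact_mod_cast ha)

theorem ePos_neg_coe_mul {a : ℝ} (ha : 0 ≤ a) (x : EReal) :
    ePos (-((a : EReal) * x)) = ENNReal.ofReal a * ePos (-x) := by
  rw [← ePos_coe_mul ha, mul_neg]

/-- `x⁺ + g = f + x⁻` whenever `x = f - g`: the cancellation-free form of the comparison between a
decomposition and the canonical one. -/
theorem ePos_add_eq {x : EReal} {f g : ℝ≥0∞} (hg : g ≠ ⊤) (hx : x = (f : EReal) - (g : EReal)) :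
    ePos x + g = f + ePos (-x) := by
  lift g to NNReal using hg
  subst hx
  by_cases hf : f = ⊤
  · subst hf
    have : ((⊤ : ℝ≥0∞) : EReal) - ((g : ℝ≥0∞) : EReal) = ⊤ := rfl
    rw [this]
    simp [ePos]
  · lift f to NNReal using hf
    have h : ((f : ℝ≥0∞) : EReal) - ((g : ℝ≥0∞) : EReal) = (((f : ℝ) - g : ℝ) : EReal) := rfl
    have h2 : -(((f : ℝ) - g : ℝ) : EReal) = (((g : ℝ) - f : ℝ) : EReal) := by
      rw [← EReal.coe_neg, _root_.neg_sub]
    rw [h, h2, ePos_coe, ePos_coe]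
    rcases le_total (f : ℝ) g with hfg | hfg
    · rw [ENNReal.ofReal_of_nonpos (by linarith), zero_add, ← ENNReal.ofReal_coe_nnreal (p := g),
        ← ENNReal.ofReal_coe_nnreal (p := f), ← ENNReal.ofReal_add f.coe_nonneg (by linarith)]
      congr 1; simp
    · rw [ENNReal.ofReal_of_nonpos (by linarith : (g : ℝ) - f ≤ 0), add_zero,
        ← ENNReal.ofReal_coe_nnreal (p := g),
        ← ENNReal.ofReal_coe_nnreal (p := f), ← ENNReal.ofReal_add (by linarith) g.coe_nonneg]
      congr 1; simp

variable {mΩ : MeasurableSpace Ω} {μ : Measure Ω}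

theorem EInt_of_quasi {ξ : Ω → EReal} (h : QuasiIntegrable μ ξ) :
    EInt μ ξ = ((∫⁻ ω, ePos (ξ ω) ∂μ : ℝ≥0∞) : EReal) - ((∫⁻ ω, ePos (-(ξ ω)) ∂μ : ℝ≥0∞) : EReal) := by
  unfold EInt
  split_ifs with h1
  · rw [h1]
    have h2 := h.resolve_left (not_not.2 h1)
    generalize ∫⁻ ω, ePos (-(ξ ω)) ∂μ = b at *
    lift b to NNReal using h2
    rfl
  · rfl

theorem EInt_le (ξ : Ω → EReal) : EInt μ ξ ≤ ((∫⁻ ω, ePos (ξ ω) ∂μ : ℝ≥0∞) : EReal) := by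
  unfold EInt
  split_ifs with h1
  · rw [h1]; rfl
  · exact (EReal.sub_le_sub le_rfl (EReal.coe_ennreal_nonneg _)).trans (by simp)

theorem le_EInt (ξ : Ω → EReal) : -((∫⁻ ω, ePos (-ξ ω) ∂μ : ℝ≥0∞) : EReal) ≤ EInt μ ξ := by
  unfold EInt
  split_ifs with h1
  · exact le_top
  · rw [sub_eq_add_neg]
    exact (by simp : _ ≤ (0 : EReal) + -((∫⁻ ω, ePos (-ξ ω) ∂μ : ℝ≥0∞) : EReal)).trans
      (add_le_add (EReal.coe_ennreal_nonneg _) le_rfl)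

theorem EInt_mono {ξ η : Ω → EReal} (h : ∀ᵐ ω ∂μ, ξ ω ≤ η ω) : EInt μ ξ ≤ EInt μ η := by
  have h1 : ∫⁻ ω, ePos (ξ ω) ∂μ ≤ ∫⁻ ω, ePos (η ω) ∂μ :=
    lintegral_mono_ae (h.mono fun ω hω => ePos_mono hω)
  have h2 : ∫⁻ ω, ePos (-η ω) ∂μ ≤ ∫⁻ ω, ePos (-ξ ω) ∂μ :=
    lintegral_mono_ae (h.mono fun ω hω => ePos_mono (EReal.neg_le_neg_iff.2 hω))
  unfold EInt
  split_ifs with h3 h4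
  · exact le_rfl
  · rw [h3, top_le_iff] at h1; exact absurd h1 h4
  · exact le_top
  · exact EReal.sub_le_sub (by exact_mod_cast h1) (by exact_mod_cast h2)

theorem EInt_congr {ξ η : Ω → EReal} (h : ∀ᵐ ω ∂μ, ξ ω = η ω) : EInt μ ξ = EInt μ η :=
  le_antisymm (EInt_mono (h.mono fun _ h => h.le)) (EInt_mono (h.mono fun _ h => h.ge))

/-- The extended integral may be computed from any decomposition `ξ = f - g` into nonnegative
functions with `∫ g < ∞`, not only from the positive and negative parts. -/
theorem EInt_eq_sub {ξ : Ω → EReal} {f g : Ω → ℝ≥0∞} (hf : AEMeasurable f μ)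
    (hg : AEMeasurable g μ) (hg' : ∫⁻ ω, g ω ∂μ ≠ ⊤)
    (hξ : ∀ᵐ ω ∂μ, ξ ω = (f ω : EReal) - (g ω : EReal)) :
    EInt μ ξ = ((∫⁻ ω, f ω ∂μ : ℝ≥0∞) : EReal) - ((∫⁻ ω, g ω ∂μ : ℝ≥0∞) : EReal) := by
  have hgf := ae_lt_top' hg hg'
  have key : ∀ᵐ ω ∂μ, ePos (ξ ω) + g ω = f ω + ePos (-ξ ω) := by
    filter_upwards [hξ, hgf] with ω h1 h2 using ePos_add_eq h2.ne h1
  have key2 := lintegral_congr_ae key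
  rw [lintegral_add_right' _ hg, lintegral_add_left' hf] at key2
  have hneg : ∫⁻ ω, ePos (-ξ ω) ∂μ ≠ ⊤ := by
    refine ne_top_of_le_ne_top hg' (lintegral_mono_ae ?_)
    filter_upwards [hξ, hgf] with ω h1 h2
    rw [h1]
    have : (g ω : EReal).toENNReal = g ω := EReal.toENNReal_coe
    rw [← this, ePos_eq]
    apply EReal.toENNReal_le_toENNReal
    rw [EReal.neg_sub (by simp) (by right; simpa using h2.ne), add_comm, ← sub_eq_add_neg]
    exact (EReal.sub_le_sub le_rfl (EReal.coe_ennreal_nonneg _)).trans (by simp)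
  rw [EInt_of_quasi (Or.inr hneg)]
  generalize ∫⁻ ω, ePos (ξ ω) ∂μ = a at *
  generalize ∫⁻ ω, ePos (-ξ ω) ∂μ = b at *
  generalize ∫⁻ ω, f ω ∂μ = c at *
  generalize ∫⁻ ω, g ω ∂μ = d at *
  lift b to NNReal using hneg
  lift d to NNReal using hg'
  by_cases ha : a = ⊤
  · subst ha
    have : c = ⊤ := by
      by_contra hc
      lift c to NNReal using hc
      simp at key2
      exact absurd key2.symm (by exact_mod_cast ENNReal.coe_ne_top)
    rw [this]; rfl
  · lift a to NNReal using ha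
    have : c ≠ ⊤ := by
      rintro rfl
      simp at key2
    lift c to NNReal using this
    have h5 : (a : ℝ) + d = c + b := by exact_mod_cast key2
    have h6 : ((a : ℝ) - b : ℝ) = (c : ℝ) - d := by linarith
    exact congrArg Real.toEReal h6

/-- The extended integral is additive in an integrable summand, as soon as the negative part of the
other summand is integrable. -/
theorem EInt_sub_integrable {ξ : Ω → EReal} {φ : Ω → ℝ} (hξ : AEMeasurable ξ μ)
    (hneg : ∫⁻ ω, ePos (-ξ ω) ∂μ ≠ ⊤) (hφ : Integrable φ μ) :
    EInt μ (fun ω => ξ ω - (φ ω : EReal)) = EInt μ ξ - ((∫ ω, φ ω ∂μ : ℝ) : EReal) := by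
  have m1 : AEMeasurable (fun ω => ePos (ξ ω)) μ := measurable_ePos.comp_aemeasurable hξ
  have m2 : AEMeasurable (fun ω => ePos (-ξ ω)) μ := measurable_ePos.comp_aemeasurable hξ.neg
  have m3 : AEMeasurable (fun ω => ENNReal.ofReal (φ ω)) μ := hφ.aemeasurable.ennreal_ofReal
  have m4 : AEMeasurable (fun ω => ENNReal.ofReal (-φ ω)) μ := hφ.neg.aemeasurable.ennreal_ofReal
  have f1 : ∫⁻ ω, ENNReal.ofReal (φ ω) ∂μ ≠ ⊤ := hφ.lintegral_lt_top.ne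
  have f2 : ∫⁻ ω, ENNReal.ofReal (-φ ω) ∂μ ≠ ⊤ := hφ.neg.lintegral_lt_top.ne
  have := EInt_eq_sub (μ := μ) (ξ := fun ω => ξ ω - (φ ω : EReal))
    (f := fun ω => ePos (ξ ω) + ENNReal.ofReal (-φ ω))
    (g := fun ω => ePos (-ξ ω) + ENNReal.ofReal (φ ω)) (m1.add m4) (m2.add m3)
    (by rw [lintegral_add_left' m2]; exact ENNReal.add_ne_top.2 ⟨hneg, f1⟩)
    (by
      filter_upwards [ae_lt_top' m2 hneg] with ω h1
      induction h : ξ ω with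
      | bot => rw [h] at h1; simp [ePos] at h1
      | top =>
        simp only [EReal.neg_top]
        have : ePos ⊥ = 0 := by simp [ePos]
        rw [this, zero_add]
        have : ePos ⊤ = ⊤ := by simp [ePos]
        rw [this, top_add]
        rfl
      | coe x =>
        rw [← EReal.coe_neg, ePos_coe, ePos_coe, EReal.coe_ennreal_add, EReal.coe_ennreal_add]
        simp only [EReal.coe_ennreal_ofReal]
        norm_cast
        rcases le_total x 0 with hx | hx <;> rcases le_total (φ ω) 0 with hy | hy <;>
          simp [hx, hy] <;> ring)
  rw [this, lintegral_add_left' m1, lintegral_add_left' m2, EInt_of_quasi (Or.inr hneg),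
    integral_eq_lintegral_pos_part_sub_lintegral_neg_part hφ]
  generalize ∫⁻ ω, ePos (ξ ω) ∂μ = a at *
  generalize ∫⁻ ω, ePos (-ξ ω) ∂μ = b at *
  generalize ∫⁻ ω, ENNReal.ofReal (φ ω) ∂μ = c at *
  generalize ∫⁻ ω, ENNReal.ofReal (-φ ω) ∂μ = d at *
  lift b to NNReal using hneg
  lift c to NNReal using f1
  lift d to NNReal using f2
  by_cases ha : a = ⊤
  · subst ha; rfl
  · lift a to NNReal using ha
    have h6 : ((a : ℝ) + d - (b + c) : ℝ) = (a : ℝ) - b - (c - d) := by ring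
    exact congrArg Real.toEReal h6

theorem lintegral_ePos_indicator (B : Set Ω) (hB : MeasurableSet B) (ξ : Ω → EReal) :
    ∫⁻ ω, ePos (((B.indicator (fun _ => (1 : ℝ)) ω : ℝ) : EReal) * ξ ω) ∂μ =
      ∫⁻ ω in B, ePos (ξ ω) ∂μ := by
  rw [← lintegral_indicator hB]
  congr 1
  ext ω
  by_cases h : ω ∈ B <;> simp [h, ePos_eq]

theorem lintegral_ePos_neg_indicator (B : Set Ω) (hB : MeasurableSet B) (ξ : Ω → EReal) :
    ∫⁻ ω, ePos (-(((B.indicator (fun _ => (1 : ℝ)) ω : ℝ) : EReal) * ξ ω)) ∂μ =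
      ∫⁻ ω in B, ePos (-ξ ω) ∂μ := by
  rw [← lintegral_ePos_indicator B hB]
  simp only [mul_neg]

/-- If `ξ'` has the same integral as `ξ` over `{ξ' ≤ 0}` (inside `A`), then its negative part is
dominated by that of `ξ`. -/
theorem setLIntegral_neg_le {ξ ξ' : Ω → EReal} {A : Set Ω} (hA : MeasurableSet A)
    (hB : MeasurableSet (A ∩ {ω | ξ' ω ≤ 0}))
    (H : EInt μ (fun ω => (((A ∩ {ω | ξ' ω ≤ 0}).indicator (fun _ => (1 : ℝ)) ω : ℝ) : EReal) * ξ' ω)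
      = EInt μ (fun ω => (((A ∩ {ω | ξ' ω ≤ 0}).indicator (fun _ => (1 : ℝ)) ω : ℝ) : EReal) * ξ ω)) :
    ∫⁻ ω in A, ePos (-ξ' ω) ∂μ ≤ ∫⁻ ω, ePos (-ξ ω) ∂μ := by
  set B := A ∩ {ω | ξ' ω ≤ 0} with hBdef
  have h1 : ∫⁻ ω in B, ePos (ξ' ω) ∂μ = 0 := by
    rw [setLIntegral_congr_fun (g := fun _ => 0) hB (fun ω hω => ePos_eq_zero.2 hω.2)]
    simp
  have h2 : ∫⁻ ω in B, ePos (-ξ' ω) ∂μ = ∫⁻ ω in A, ePos (-ξ' ω) ∂μ := by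
    rw [← lintegral_indicator hB, ← lintegral_indicator hA]
    congr 1
    ext ω
    by_cases hω : ω ∈ A <;> by_cases hω' : ξ' ω ≤ 0
    · simp [B, hω, hω']
    · have : ePos (-ξ' ω) = 0 := ePos_eq_zero.2 (by simpa using (not_le.1 hω').le)
      simp [B, hω, hω', this]
    · simp [B, hω]
    · simp [B, hω]
  have h3 := le_EInt (μ := μ) (fun ω => ((B.indicator (fun _ => (1 : ℝ)) ω : ℝ) : EReal) * ξ ω)
  rw [← H] at h3
  have hq : QuasiIntegrable μ (fun ω => ((B.indicator (fun _ => (1 : ℝ)) ω : ℝ) : EReal) * ξ' ω) := by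
    left; rw [lintegral_ePos_indicator B hB, h1]; simp
  rw [EInt_of_quasi hq, lintegral_ePos_indicator B hB, h1, lintegral_ePos_neg_indicator B hB,
    lintegral_ePos_neg_indicator B hB, h2] at h3
  simp only [EReal.coe_ennreal_zero, zero_sub, EReal.neg_le_neg_iff, EReal.coe_ennreal_le_coe_ennreal_iff] at h3
  exact h3.trans (setLIntegral_le_lintegral _ _)

/-- Counterpart of `setLIntegral_neg_le` for positive parts, tested on `{ξ' ≥ 0}`. -/
theorem setLIntegral_pos_le {ξ ξ' : Ω → EReal} {A : Set Ω} (hA : MeasurableSet A)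
    (hB : MeasurableSet (A ∩ {ω | 0 ≤ ξ' ω}))
    (H : EInt μ (fun ω => (((A ∩ {ω | 0 ≤ ξ' ω}).indicator (fun _ => (1 : ℝ)) ω : ℝ) : EReal) * ξ' ω)
      = EInt μ (fun ω => (((A ∩ {ω | 0 ≤ ξ' ω}).indicator (fun _ => (1 : ℝ)) ω : ℝ) : EReal) * ξ ω)) :
    ∫⁻ ω in A, ePos (ξ' ω) ∂μ ≤ ∫⁻ ω, ePos (ξ ω) ∂μ := by
  set B := A ∩ {ω | 0 ≤ ξ' ω} with hBdef
  have h1 : ∫⁻ ω in B, ePos (-ξ' ω) ∂μ = 0 := by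
    rw [setLIntegral_congr_fun (g := fun _ => 0) hB
      (fun ω hω => ePos_eq_zero.2 (by simpa using hω.2))]
    simp
  have h2 : ∫⁻ ω in B, ePos (ξ' ω) ∂μ = ∫⁻ ω in A, ePos (ξ' ω) ∂μ := by
    rw [← lintegral_indicator hB, ← lintegral_indicator hA]
    congr 1
    ext ω
    by_cases hω : ω ∈ A <;> by_cases hω' : 0 ≤ ξ' ω
    · simp [B, hω, hω']
    · have : ePos (ξ' ω) = 0 := ePos_eq_zero.2 (not_le.1 hω').le
      simp [B, hω, hω', this]
    · simp [B, hω]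
    · simp [B, hω]
  have h3 := EInt_le (μ := μ) (fun ω => ((B.indicator (fun _ => (1 : ℝ)) ω : ℝ) : EReal) * ξ ω)
  rw [← H] at h3
  have hq : QuasiIntegrable μ (fun ω => ((B.indicator (fun _ => (1 : ℝ)) ω : ℝ) : EReal) * ξ' ω) := by
    right; rw [lintegral_ePos_neg_indicator B hB, h1]; simp
  rw [EInt_of_quasi hq, lintegral_ePos_indicator B hB, lintegral_ePos_neg_indicator B hB, h1,
    lintegral_ePos_indicator B hB, h2] at h3
  simp only [EReal.coe_ennreal_zero, sub_zero, EReal.coe_ennreal_le_coe_ennreal_iff] at h3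
  exact h3.trans (setLIntegral_le_lintegral _ _)

end ExtendedIntegral

/-! ### Conditional expectation of extended-real random variables -/

section CondExpER

variable {G : MeasurableSpace Ω} {mΩ : MeasurableSpace Ω} {μ : Measure Ω}

theorem measurable_indicator_one {A : Set Ω} (hA : MeasurableSet[G] A) :
    Measurable[G] (A.indicator (fun _ => (1 : ℝ))) :=
  Measurable.indicator (@measurable_const _ _ _ G _) hA

theorem IsCondExpER.indicator {ξ ξ' : Ω → EReal} (h : IsCondExpER μ G ξ ξ') {A : Set Ω}
    (hA : MeasurableSet[G] A) :
    EInt μ (fun ω => ((A.indicator (fun _ => (1 : ℝ)) ω : ℝ) : EReal) * ξ' ω) =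
      EInt μ (fun ω => ((A.indicator (fun _ => (1 : ℝ)) ω : ℝ) : EReal) * ξ ω) :=
  h.2 _ (measurable_indicator_one hA) (fun _ => Set.indicator_nonneg (fun _ _ => zero_le_one) _)
    ⟨1, fun _ => Set.indicator_le_self' (fun _ _ => zero_le_one) _⟩

/-- Integrability of the negative part passes to the conditional expectation. -/
theorem IsCondExpER.neg_ne_top (hG : G ≤ mΩ) {ξ ξ' : Ω → EReal} (h : IsCondExpER μ G ξ ξ')
    (hneg : ∫⁻ ω, ePos (-ξ ω) ∂μ ≠ ⊤) : ∫⁻ ω, ePos (-ξ' ω) ∂μ ≠ ⊤ := by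
  have hm : MeasurableSet[G] (Set.univ ∩ {ω | ξ' ω ≤ 0}) := by
    rw [Set.univ_inter]
    exact h.1 measurableSet_Iic
  have := setLIntegral_neg_le MeasurableSet.univ (hG _ hm) (h.indicator hm)
  rw [Measure.restrict_univ] at this
  exact ne_top_of_le_ne_top hneg this

/-- Two `G`-measurable functions with integrable negative parts are ordered almost surely if their
integrals over all `G`-measurable sets are. -/
theorem ae_le_of_forall_EInt_le [IsFiniteMeasure μ] (hG : G ≤ mΩ) {ξ η : Ω → EReal}
    (hξ : Measurable[G] ξ) (hη : Measurable[G] η)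
    (hξn : ∫⁻ ω, ePos (-ξ ω) ∂μ ≠ ⊤) (hηn : ∫⁻ ω, ePos (-η ω) ∂μ ≠ ⊤)
    (H : ∀ A, MeasurableSet[G] A →
      EInt μ (fun ω => ((A.indicator (fun _ => (1 : ℝ)) ω : ℝ) : EReal) * ξ ω) ≤
      EInt μ (fun ω => ((A.indicator (fun _ => (1 : ℝ)) ω : ℝ) : EReal) * η ω)) :
    ∀ᵐ ω ∂μ, ξ ω ≤ η ω := by
  have hξm : Measurable ξ := hξ.mono hG le_rfl
  have hηm : Measurable η := hη.mono hG le_rfl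
  have key : ∀ N : ℕ, ∀ᵐ ω ∂μ, ¬ (η ω < ξ ω ∧ η ω ≤ (N : ℝ)) := by
    intro N
    -- Truncating at `η ≤ N` makes the integral of `η` finite, so that it can be cancelled.
    set A : Set Ω := {ω | η ω < ξ ω} ∩ {ω | η ω ≤ ((N : ℝ) : EReal)} with hAdef
    have hA : MeasurableSet[G] A :=
      MeasurableSet.inter (measurableSet_lt hη hξ) (hη measurableSet_Iic)
    have hA' := hG _ hA
    have h := H A hA
    have fin1 : ∫⁻ ω in A, ePos (-ξ ω) ∂μ ≠ ⊤ :=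
      ne_top_of_le_ne_top hξn (setLIntegral_le_lintegral _ _)
    have fin2 : ∫⁻ ω in A, ePos (-η ω) ∂μ ≠ ⊤ :=
      ne_top_of_le_ne_top hηn (setLIntegral_le_lintegral _ _)
    have fin3 : ∫⁻ ω in A, ePos (η ω) ∂μ ≠ ⊤ := by
      refine ne_top_of_le_ne_top (b := ∫⁻ ω in A, ENNReal.ofReal N ∂μ) ?_
        (setLIntegral_mono' hA' fun ω hω => ePos_mono hω.2)
      rw [setLIntegral_const]
      exact ENNReal.mul_ne_top ENNReal.ofReal_ne_top (measure_ne_top _ _)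
    rw [EInt_of_quasi (Or.inr (by rwa [lintegral_ePos_neg_indicator A hA'])),
      EInt_of_quasi (Or.inr (by rwa [lintegral_ePos_neg_indicator A hA'])),
      lintegral_ePos_neg_indicator A hA', lintegral_ePos_neg_indicator A hA',
      lintegral_ePos_indicator A hA', lintegral_ePos_indicator A hA'] at h
    have m1 : Measurable fun ω => ePos (ξ ω) := measurable_ePos.comp hξm
    have m2 : Measurable fun ω => ePos (η ω) := measurable_ePos.comp hηm
    have m3 : Measurable fun ω => ePos (-ξ ω) := measurable_ePos.comp hξm.neg
    have m4 : Measurable fun ω => ePos (-η ω) := measurable_ePos.comp hηm.neg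
    have hle : ∫⁻ ω in A, (ePos (ξ ω) + ePos (-η ω)) ∂μ ≤
        ∫⁻ ω in A, (ePos (η ω) + ePos (-ξ ω)) ∂μ := by
      rw [lintegral_add_left m1, lintegral_add_left m2]
      generalize ∫⁻ ω in A, ePos (ξ ω) ∂μ = a at *
      generalize ∫⁻ ω in A, ePos (-ξ ω) ∂μ = b at *
      generalize ∫⁻ ω in A, ePos (η ω) ∂μ = c at *
      generalize ∫⁻ ω in A, ePos (-η ω) ∂μ = d at *
      lift b to NNReal using fin1
      lift d to NNReal using fin2
      lift c to NNReal using fin3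
      by_cases ha : a = ⊤
      · subst ha
        exfalso
        exact absurd (top_le_iff.1 h) (EReal.coe_ne_top ((c : ℝ) - d))
      · lift a to NNReal using ha
        have h2 : (((a : ℝ) - b : ℝ) : EReal) ≤ (((c : ℝ) - d : ℝ) : EReal) := h
        have h3 := EReal.coe_le_coe_iff.1 h2
        have h4 : (a : ℝ) + d ≤ c + b := by linarith
        exact_mod_cast h4
    have hpt : ∀ ω ∈ A, ePos (η ω) + ePos (-ξ ω) < ePos (ξ ω) + ePos (-η ω) ∨ η ω = ⊥ := by
      rintro ω ⟨h1, h2⟩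
      rw [Set.mem_ofPred_eq] at h1 h2
      induction hη' : η ω with
      | bot => exact Or.inr rfl
      | top => rw [hη'] at h1; exact absurd h1 not_top_lt
      | coe y =>
        left
        induction hξ' : ξ ω with
        | bot => rw [hξ'] at h1; exact absurd h1 not_lt_bot
        | top =>
          have e1 : ePos ⊤ = ⊤ := rfl
          have e2 : ePos (-⊤) = 0 := by simp [ePos]
          rw [e1, e2, top_add, add_zero, ePos_coe]
          exact ENNReal.ofReal_lt_top
        | coe x =>
          rw [hη', hξ', EReal.coe_lt_coe_iff] at h1
          have hmx : ∀ z : ℝ, ENNReal.ofReal z = ENNReal.ofReal (max z 0) := fun z => by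
            rw [ENNReal.ofReal_max, ENNReal.ofReal_zero, max_eq_left zero_le]
          rw [← EReal.coe_neg, ← EReal.coe_neg, ePos_coe, ePos_coe, ePos_coe, ePos_coe,
            hmx y, hmx (-x), hmx x, hmx (-y),
            ← ENNReal.ofReal_add (by positivity) (by positivity),
            ← ENNReal.ofReal_add (by positivity) (by positivity),
            ENNReal.ofReal_lt_ofReal_iff_of_nonneg (by positivity)]
          rcases le_total x 0 with hx | hx <;> rcases le_total y 0 with hy | hy <;>
            simp [hx, hy] <;> linarith
    have hbot : ∀ᵐ ω ∂μ, η ω ≠ ⊥ := by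
      filter_upwards [ae_lt_top m4 hηn] with ω hω h
      rw [h] at hω; simp [ePos] at hω
    have heq := ae_eq_of_ae_le_of_lintegral_le (μ := μ.restrict A)
      (f := fun ω => ePos (η ω) + ePos (-ξ ω)) (g := fun ω => ePos (ξ ω) + ePos (-η ω))
      (by
        rw [Filter.EventuallyLE, ae_restrict_iff' hA']
        filter_upwards [hbot] with ω h1 h2
        exact ((hpt ω h2).resolve_right h1).le)
      (by rw [lintegral_add_left m2]; exact ENNReal.add_ne_top.2 ⟨fin3, fin1⟩)
      (m1.add m4).aemeasurable hle
    rw [Filter.EventuallyEq, ae_restrict_iff' hA'] at heq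
    filter_upwards [heq, hbot] with ω h1 h2 h3
    exact ((hpt ω h3).resolve_right h2).ne (h1 h3)
  filter_upwards [ae_all_iff.2 key] with ω hω
  by_contra hlt
  rw [not_le] at hlt
  obtain ⟨r, hr, -⟩ := EReal.lt_iff_exists_real_btwn.1 (hlt.trans_le le_top)
  obtain ⟨N, hN⟩ := exists_nat_ge r
  exact hω N ⟨hlt, hr.le.trans (by exact_mod_cast hN)⟩

/-- Monotone convergence along an increasing cover; `f` need not be measurable. -/
theorem lintegral_tendsto_of_cover {A : ℕ → Set Ω} (hmono : Monotone A)
    (hcov : ∀ ω, ∃ j, ω ∈ A j) (f : Ω → ℝ≥0∞) :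
    Filter.Tendsto (fun j => ∫⁻ ω in A j, f ω ∂μ) Filter.atTop (nhds (∫⁻ ω, f ω ∂μ)) := by
  have hU : (⋃ j, A j) = Set.univ := Set.eq_univ_of_forall fun ω => Set.mem_iUnion.2 (hcov ω)
  have h := setLIntegral_iUnion_of_directed f (μ := μ) hmono.directed_le
  rw [hU, Measure.restrict_univ] at h
  rw [h]
  exact tendsto_atTop_iSup fun i j hij => lintegral_mono_set (hmono hij)

theorem quasi_coe_mul {ξ : Ω → EReal} (hq : QuasiIntegrable μ ξ) {α : Ω → ℝ}
    (h0 : ∀ ω, 0 ≤ α ω) (hC : ∃ C, ∀ ω, α ω ≤ C) :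
    QuasiIntegrable μ (fun ω => (α ω : EReal) * ξ ω) := by
  obtain ⟨C, hC⟩ := hC
  have aux : ∀ f : Ω → ℝ≥0∞, ∫⁻ ω, f ω ∂μ ≠ ⊤ → ∫⁻ ω, ENNReal.ofReal (α ω) * f ω ∂μ ≠ ⊤ := by
    intro f hf
    refine ne_top_of_le_ne_top (ENNReal.mul_ne_top (ENNReal.ofReal_ne_top (r := C)) hf) ?_
    rw [← lintegral_const_mul' _ _ ENNReal.ofReal_ne_top]
    exact lintegral_mono fun ω => mul_le_mul_left (ENNReal.ofReal_le_ofReal (hC ω)) _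
  unfold QuasiIntegrable
  simp only [ePos_coe_mul (h0 _), ePos_neg_coe_mul (h0 _)]
  exact hq.imp (aux _) (aux _)

/-- Localization: for quasi-integrable `ξ`, the defining identity of the conditional expectation
need only be tested with weights vanishing off the members of a fixed countable increasing
`G`-measurable cover. -/
theorem isCondExpER_of_localized (hG : G ≤ mΩ) {ξ ξ' : Ω → EReal}
    (hξ' : Measurable[G] ξ') (hq : QuasiIntegrable μ ξ) {A : ℕ → Set Ω}
    (hA : ∀ j, MeasurableSet[G] (A j)) (hmono : Monotone A) (hcov : ∀ ω, ∃ j, ω ∈ A j)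
    (H : ∀ j, ∀ α : Ω → ℝ, Measurable[G] α → (∀ ω, 0 ≤ α ω) → (∃ C, ∀ ω, α ω ≤ C) →
      (∀ ω ∉ A j, α ω = 0) →
      EInt μ (fun ω => (α ω : EReal) * ξ' ω) = EInt μ (fun ω => (α ω : EReal) * ξ ω)) :
    IsCondExpER μ G ξ ξ' := by
  have Hind : ∀ j, ∀ B ⊆ A j, MeasurableSet[G] B →
      EInt μ (fun ω => ((B.indicator (fun _ => (1 : ℝ)) ω : ℝ) : EReal) * ξ' ω) =
      EInt μ (fun ω => ((B.indicator (fun _ => (1 : ℝ)) ω : ℝ) : EReal) * ξ ω) :=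
    fun j B hBA hB => H j _ (measurable_indicator_one hB)
      (fun _ => Set.indicator_nonneg (fun _ _ => zero_le_one) _)
      ⟨1, fun _ => Set.indicator_le_self' (fun _ _ => zero_le_one) _⟩
      (fun ω hω => Set.indicator_of_notMem (fun h => hω (hBA h)) _)
  have hA' := fun j => hG _ (hA j)
  have hq' : QuasiIntegrable μ ξ' := by
    rcases hq with hq | hq
    · left
      refine ne_top_of_le_ne_top hq (le_of_tendsto' (lintegral_tendsto_of_cover hmono hcov _)
        fun j => ?_)
      have hB : MeasurableSet[G] (A j ∩ {ω | 0 ≤ ξ' ω}) :=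
        MeasurableSet.inter (hA j) (hξ' measurableSet_Ici)
      exact setLIntegral_pos_le (hA' j) (hG _ hB) (Hind j _ Set.inter_subset_left hB)
    · right
      refine ne_top_of_le_ne_top hq (le_of_tendsto' (lintegral_tendsto_of_cover hmono hcov _)
        fun j => ?_)
      have hB : MeasurableSet[G] (A j ∩ {ω | ξ' ω ≤ 0}) :=
        MeasurableSet.inter (hA j) (hξ' measurableSet_Iic)
      exact setLIntegral_neg_le (hA' j) (hG _ hB) (Hind j _ Set.inter_subset_left hB)
  refine ⟨hξ', fun α hα h0 hC => ?_⟩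
  have lim : ∀ η : Ω → EReal, QuasiIntegrable μ η →
      Filter.Tendsto (fun j => EInt μ (fun ω => (((A j).indicator α ω : ℝ) : EReal) * η ω))
        Filter.atTop (nhds (EInt μ (fun ω => (α ω : EReal) * η ω))) := by
    intro η hη
    have hη' := quasi_coe_mul hη h0 hC
    have e1 : ∀ j, ∫⁻ ω, ePos ((((A j).indicator α ω : ℝ) : EReal) * η ω) ∂μ =
        ∫⁻ ω in A j, ePos ((α ω : EReal) * η ω) ∂μ := by
      intro j
      rw [← lintegral_indicator (hA' j)]
      congr 1; ext ω
      by_cases h : ω ∈ A j <;> simp [h, ePos_eq]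
    have e2 : ∀ j, ∫⁻ ω, ePos (-((((A j).indicator α ω : ℝ) : EReal) * η ω)) ∂μ =
        ∫⁻ ω in A j, ePos (-((α ω : EReal) * η ω)) ∂μ := by
      intro j
      rw [← lintegral_indicator (hA' j)]
      congr 1; ext ω
      by_cases h : ω ∈ A j <;> simp [h, ePos_eq]
    have t1 := lintegral_tendsto_of_cover (μ := μ) hmono hcov
      (fun ω => ePos ((α ω : EReal) * η ω))
    have t2 := lintegral_tendsto_of_cover (μ := μ) hmono hcov
      (fun ω => ePos (-((α ω : EReal) * η ω)))
    rw [EInt_of_quasi hη']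
    have hj : ∀ j, EInt μ (fun ω => (((A j).indicator α ω : ℝ) : EReal) * η ω) =
        ((∫⁻ ω in A j, ePos ((α ω : EReal) * η ω) ∂μ : ℝ≥0∞) : EReal) +
        -((∫⁻ ω in A j, ePos (-((α ω : EReal) * η ω)) ∂μ : ℝ≥0∞) : EReal) := by
      intro j
      rw [EInt_of_quasi, e1, e2, sub_eq_add_neg]
      unfold QuasiIntegrable
      rw [e1, e2]
      exact hη'.imp (fun h => ne_top_of_le_ne_top h (setLIntegral_le_lintegral _ _))
        (fun h => ne_top_of_le_ne_top h (setLIntegral_le_lintegral _ _))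
    simp only [hj, sub_eq_add_neg]
    have c1 := (continuous_coe_ennreal_ereal.tendsto _).comp t1
    have c2 := (continuous_neg.tendsto _).comp ((continuous_coe_ennreal_ereal.tendsto _).comp t2)
    refine (EReal.continuousAt_add (p := (_, _)) ?_ ?_).tendsto.comp (c1.prodMk_nhds c2)
    · refine hη'.imp (fun h => ?_) (fun h => ?_)
      · simpa using h
      · simpa [EReal.neg_eq_bot_iff] using h
    · left; simp
  refine tendsto_nhds_unique (lim ξ' hq') ?_
  refine (lim ξ hq).congr fun j => (H j _ ?_ ?_ ?_ ?_).symm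
  · exact Measurable.indicator hα (hA j)
  · exact fun ω => Set.indicator_nonneg (fun _ _ => h0 _) _
  · obtain ⟨C, hC⟩ := hC
    exact ⟨C, fun ω => (Set.indicator_le_self' (fun _ _ => h0 _) _).trans (hC ω)⟩
  · exact fun ω hω => Set.indicator_of_notMem hω _

end CondExpER

/-! ### Tilting integrands by linear terms -/

section Shift

variable {T : ℕ} {nn : ℕ → ℕ}

theorem sdot_zero_right (x : Strat T nn) : sdot x 0 = 0 := by simp [sdot]

theorem sdot_neg_right (x v : Strat T nn) : sdot x (-v) = -sdot x v := by simp [sdot]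

theorem sdot_smul_left (a : ℝ) (x v : Strat T nn) : sdot (a • x) v = a * sdot x v := by
  simp [sdot, inner_smul_left, Finset.mul_sum]

theorem abs_sdot_le (x v : Strat T nn) : |sdot x v| ≤ (T + 1) * (‖x‖ * ‖v‖) := by
  refine (Finset.abs_sum_le_sum_abs _ _).trans ?_
  refine (Finset.sum_le_card_nsmul _ _ (‖x‖ * ‖v‖) fun t _ => ?_).trans ?_
  · exact (abs_real_inner_le_norm _ _).trans
      (mul_le_mul (norm_le_pi_norm x t) (norm_le_pi_norm v t) (norm_nonneg _) (norm_nonneg _))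
  · simp

theorem continuous_sdot_left (v : Strat T nn) : Continuous fun x : Strat T nn => sdot x v :=
  continuous_finsetSum _ fun t _ => (continuous_apply t).inner continuous_const

theorem measurable_sdot {α : Type*} {mα : MeasurableSpace α} {x v : α → Strat T nn}
    (hx : Measurable x) (hv : Measurable v) : Measurable fun a => sdot (x a) (v a) :=
  Finset.measurable_sum _ fun t _ =>
    ((measurable_pi_iff.1 hx) t).inner ((measurable_pi_iff.1 hv) t)

/-- Only a.e.-measurability of `q` is available. -/
theorem aemeasurable_sdot {mΩ : MeasurableSpace Ω} {μ : Measure Ω} {x q : Ω → Strat T nn}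
    (hx : Measurable x) (hq : AEMeasurable q μ) : AEMeasurable (fun ω => sdot (x ω) (q ω)) μ :=
  ⟨fun ω => sdot (x ω) (hq.mk q ω), measurable_sdot hx hq.measurable_mk,
    hq.ae_eq_mk.mono fun ω h => congrArg (sdot (x ω)) h⟩

theorem integrable_sdot {mΩ : MeasurableSpace Ω} {μ : Measure Ω} {x q : Ω → Strat T nn}
    (hx : Measurable x) (hC : ∃ C, ∀ ω, ‖x ω‖ ≤ C) (hq : Integrable q μ) :
    Integrable (fun ω => sdot (x ω) (q ω)) μ := by
  obtain ⟨C, hC⟩ := hC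
  refine Integrable.mono' (g := fun ω => (T + 1) * (C * ‖q ω‖))
    ((hq.norm.const_mul _).const_mul _) ?_ (Filter.Eventually.of_forall fun ω => ?_)
  · exact (aemeasurable_sdot hx hq.1.aemeasurable).aestronglyMeasurable
  · refine (abs_sdot_le _ _).trans ?_
    gcongr
    exact hC ω

theorem EReal_mul_sub_coe {a : ℝ} (ha : 0 ≤ a) (x : EReal) (b : ℝ) :
    (a : EReal) * (x - (b : EReal)) = (a : EReal) * x - ((a * b : ℝ) : EReal) := by
  rw [sub_eq_add_neg, EReal.left_distrib_of_nonneg_of_ne_top (by exact_mod_cast ha)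
    (EReal.coe_ne_top _), mul_neg, ← EReal.coe_mul, ← sub_eq_add_neg]

theorem EReal_sub_sub_neg (x : EReal) (b : ℝ) :
    x - (b : EReal) - ((-b : ℝ) : EReal) = x := by
  induction x with
  | bot => rfl
  | top => rfl
  | coe y => exact congrArg Real.toEReal (by ring)

theorem EReal_le_sub_iff (a b : ℝ) (x : EReal) :
    (a : EReal) ≤ x - (b : EReal) ↔ ((b + a : ℝ) : EReal) ≤ x := by
  induction x with
  | bot => simp
  | top => simp
  | coe y =>
    rw [← EReal.coe_sub, EReal.coe_le_coe_iff, EReal.coe_le_coe_iff]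
    constructor <;> intro h <;> linarith

theorem IsNormalIntegrand.comp {m : MeasurableSpace Ω} {E : Type*} [TopologicalSpace E]
    [MeasurableSpace E] {g : E → Ω → EReal} (hg : IsNormalIntegrand m g) {x : Ω → E}
    (hx : Measurable[m] x) : Measurable[m] fun ω => g (x ω) ω :=
  hg.1.comp (hx.prodMk measurable_id)

/-- Subtracting a finite linear term with measurable coefficient preserves normality. -/
theorem IsNormalIntegrand.shift {m : MeasurableSpace Ω} {g : Strat T nn → Ω → EReal}
    (hg : IsNormalIntegrand m g) {r : Ω → Strat T nn} (hr : Measurable[m] r) :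
    IsNormalIntegrand m fun x ω => g x ω - ((sdot x (r ω) : ℝ) : EReal) := by
  refine ⟨?_, fun ω => ?_, fun x ω => ?_⟩
  · have h1 : Measurable fun z : Strat T nn × Ω => ((sdot z.1 (r z.2) : ℝ) : EReal) :=
      (measurable_sdot measurable_fst (hr.comp measurable_snd)).coe_real_ereal
    simp only [sub_eq_add_neg]
    exact hg.1.add h1.neg
  · simp only [sub_eq_add_neg]
    refine (hg.2.1 ω).add' ?_ fun x => EReal.continuousAt_add ?_ ?_
    · exact (continuous_neg.comp
        (continuous_coe_real_ereal.comp (continuous_sdot_left (r ω)))).lowerSemicontinuous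
    · right; rw [← EReal.coe_neg]; exact EReal.coe_ne_bot _
    · right; rw [← EReal.coe_neg]; exact EReal.coe_ne_top _
  · have := hg.2.2 x ω
    induction h : g x ω with
    | bot => exact absurd h this
    | top => simp only [h, EReal.top_sub_coe]; exact top_ne_bot
    | coe y => simp only [h, ← EReal.coe_sub]; exact EReal.coe_ne_bot _

/-- `r'` represents `r` on bounded `G`-measurable strategies: `E[x·r] = E[x·r']` for all such `x`.
This is all that is needed of the conditional expectation of the vector `r`. -/
structure IsCondVec {mΩ : MeasurableSpace Ω} (μ : Measure Ω) (G : MeasurableSpace Ω)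
    (r r' : Ω → Strat T nn) : Prop where
  meas : Measurable[G] r'
  int : Integrable r μ
  int' : Integrable r' μ
  eq : ∀ x : Ω → Strat T nn, Measurable[G] x → (∃ C, ∀ ω, ‖x ω‖ ≤ C) →
    ∫ ω, sdot (x ω) (r ω) ∂μ = ∫ ω, sdot (x ω) (r' ω) ∂μ

variable {G : MeasurableSpace Ω} {mΩ : MeasurableSpace Ω} {μ : Measure Ω}

theorem lintegral_neg_ne_top_of_le {ξ : Ω → EReal} {φ : Ω → ℝ} (hφ : Integrable φ μ)
    (h : ∀ᵐ ω ∂μ, (φ ω : EReal) ≤ ξ ω) : ∫⁻ ω, ePos (-ξ ω) ∂μ ≠ ⊤ := by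
  refine ne_top_of_le_ne_top hφ.neg.lintegral_lt_top.ne (lintegral_mono_ae ?_)
  filter_upwards [h] with ω hω
  have := ePos_mono (EReal.neg_le_neg_iff.2 hω)
  rwa [← EReal.coe_neg, ePos_coe] at this

theorem lintegral_neg_coe_mul_ne_top {ξ : Ω → EReal} (hξ : ∫⁻ ω, ePos (-ξ ω) ∂μ ≠ ⊤) {α : Ω → ℝ}
    (h0 : ∀ ω, 0 ≤ α ω) (hC : ∃ C, ∀ ω, α ω ≤ C) :
    ∫⁻ ω, ePos (-((α ω : EReal) * ξ ω)) ∂μ ≠ ⊤ := by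
  obtain ⟨C, hC⟩ := hC
  simp only [ePos_neg_coe_mul (h0 _)]
  refine ne_top_of_le_ne_top (ENNReal.mul_ne_top (ENNReal.ofReal_ne_top (r := C)) hξ) ?_
  rw [← lintegral_const_mul' _ _ ENNReal.ofReal_ne_top]
  exact lintegral_mono fun ω => mul_le_mul_left (ENNReal.ofReal_le_ofReal (hC ω)) _

/-- The negative part of `g(y)` is integrable along bounded selections `y` when `g` has an
integrable affine minorant. -/
theorem lintegral_neg_comp_ne_top {g : Strat T nn → Ω → EReal} {q : Ω → Strat T nn} {m : Ω → ℝ}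
    (hq : Integrable q μ) (hm : Integrable m μ)
    (hlb : ∀ᵐ ω ∂μ, ∀ x, ((sdot x (q ω) - m ω : ℝ) : EReal) ≤ g x ω)
    {y : Ω → Strat T nn} (hy : Measurable y) (hC : ∃ C, ∀ ω, ‖y ω‖ ≤ C) :
    ∫⁻ ω, ePos (-(g (y ω) ω)) ∂μ ≠ ⊤ :=
  lintegral_neg_ne_top_of_le ((integrable_sdot hy hC hq).sub hm) (hlb.mono fun ω h => h (y ω))

/-- Conditional expectation of integrands commutes with tilting by a linear term. The tilt may
destroy or create quasi-integrability along an unbounded selection `x`, so the identity is tested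
on the sets `{‖x‖ ≤ j}`, where `x` can be replaced by a bounded selection. -/
theorem IsCondNI.shift (hG : G ≤ mΩ) {g g' : Strat T nn → Ω → EReal}
    (hgm : ∀ x, Measurable x → AEMeasurable (fun ω => g (x ω) ω) μ)
    {q : Ω → Strat T nn} {m : Ω → ℝ} (hq : Integrable q μ) (hm : Integrable m μ)
    (hlb : ∀ᵐ ω ∂μ, ∀ x, ((sdot x (q ω) - m ω : ℝ) : EReal) ≤ g x ω)
    (hc : IsCondNI μ G g g') {r r' : Ω → Strat T nn} (hr : IsCondVec μ G r r') :
    IsCondNI μ G (fun x ω => g x ω - ((sdot x (r ω) : ℝ) : EReal))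
      (fun x ω => g' x ω - ((sdot x (r' ω) : ℝ) : EReal)) := by
  have hN := hc.1.shift hr.meas
  refine ⟨hN, fun x hx hqi => isCondExpER_of_localized hG (hN.comp hx) hqi
    (A := fun j : ℕ => {ω | ‖x ω‖ ≤ j}) (fun j => ?_) ?_ (fun ω => exists_nat_ge ‖x ω‖) ?_⟩
  · exact (measurable_norm.comp hx) measurableSet_Iic
  · intro i j hij ω hω
    rw [Set.mem_ofPred_eq] at hω ⊢
    exact hω.trans (by exact_mod_cast hij)
  intro j α hα h0 hC hoff
  have hAj : MeasurableSet[G] {ω | ‖x ω‖ ≤ j} := (measurable_norm.comp hx) measurableSet_Iic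
  set A := {ω | ‖x ω‖ ≤ j} with hAdef
  -- On `A` the bounded selection `y` agrees with `x`, and the weight `α` vanishes off `A`.
  set y : Ω → Strat T nn := A.indicator x with hydef
  have hy : Measurable[G] y := hx.indicator hAj
  have hyb : ∀ ω, ‖y ω‖ ≤ j := by
    intro ω
    by_cases h : ω ∈ A
    · rw [hydef, Set.indicator_of_mem h]; exact h
    · rw [hydef, Set.indicator_of_notMem h]; simp
  have hy' : Measurable y := hy.mono hG le_rfl
  have hα' : Measurable α := hα.mono hG le_rfl
  have hneg := lintegral_neg_comp_ne_top hq hm hlb hy' ⟨j, hyb⟩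
  have hce := hc.2 y hy (Or.inr hneg)
  have hneg' := hce.neg_ne_top hG hneg
  have swap : ∀ (f : Strat T nn → Ω → EReal) (s : Ω → Strat T nn),
      (fun ω => (α ω : EReal) * (f (x ω) ω - ((sdot (x ω) (s ω) : ℝ) : EReal))) =
      fun ω => (α ω : EReal) * f (y ω) ω - ((α ω * sdot (y ω) (s ω) : ℝ) : EReal) := by
    intro f s
    ext ω
    by_cases h : ω ∈ A
    · rw [hydef, Set.indicator_of_mem h, EReal_mul_sub_coe (h0 ω)]
    · rw [hoff ω h]; simp
  have hαy : Measurable[G] fun ω => α ω • y ω := hα.smul hy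
  obtain ⟨C, hC'⟩ := hC
  have hαyb : ∃ C, ∀ ω, ‖α ω • y ω‖ ≤ C := ⟨C * j, fun ω => by
    rw [norm_smul, Real.norm_of_nonneg (h0 ω)]
    exact mul_le_mul (hC' ω) (hyb ω) (norm_nonneg _) ((h0 ω).trans (hC' ω))⟩
  have hαy' : Measurable fun ω => α ω • y ω := hαy.mono hG le_rfl
  rw [swap, swap, EInt_sub_integrable, EInt_sub_integrable, hce.2 α hα h0 ⟨C, hC'⟩]
  · simp only [← sdot_smul_left]
    rw [hr.eq _ hαy hαyb]
  · exact hα'.coe_real_ereal.aemeasurable.mul (hgm y hy')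
  · exact lintegral_neg_coe_mul_ne_top hneg h0 ⟨C, hC'⟩
  · simp only [← sdot_smul_left]
    exact integrable_sdot hαy' hαyb hr.int
  · exact (hα'.coe_real_ereal.mul (hce.1.mono hG le_rfl)).aemeasurable
  · exact lintegral_neg_coe_mul_ne_top hneg' h0 ⟨C, hC'⟩
  · simp only [← sdot_smul_left]
    exact integrable_sdot hαy' hαyb hr.int'

end Shift

/-! ### Comparison of conditional integrands -/

section Comparison

variable {T : ℕ} {nn : ℕ → ℕ} {G : MeasurableSpace Ω} {mΩ : MeasurableSpace Ω} {μ : Measure Ω}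

theorem EInt_coe {φ : Ω → ℝ} (hφ : Integrable φ μ) :
    EInt μ (fun ω => (φ ω : EReal)) = ((∫ ω, φ ω ∂μ : ℝ) : EReal) := by
  have := EInt_sub_integrable (μ := μ) (ξ := fun _ => 0) aemeasurable_const (by simp [ePos]) hφ.neg
  have h0 : EInt μ (fun _ : Ω => (0 : EReal)) = 0 := by simp [EInt, ePos]
  rw [h0] at this
  simpa [integral_neg] using this

/-- The selection principle relative to a sub-σ-algebra `G` on which the set is measurable; only
bounded `G`-measurable selections have to be tested. -/
theorem ae_forall_notMem_of_bounded_selections [IsFiniteMeasure μ] (hG : G ≤ mΩ)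
    {D : Set (Strat T nn × Ω)} (hD : MeasurableSet[MeasurableSpace.prod inferInstance G] D)
    (hsel : ∀ x : Ω → Strat T nn, Measurable[G] x → (∃ C, ∀ ω, ‖x ω‖ ≤ C) →
      ∀ᵐ ω ∂μ, (x ω, ω) ∉ D) :
    ∀ᵐ ω ∂μ, ∀ x, (x, ω) ∉ D := by
  have : PolishSpace (Strat T nn) := {}
  refine ae_of_ae_trim hG (@ae_forall_notMem_of_selections Ω _ _ _ _ _ G (μ.trim hG) _ D hD ?_)
  rintro x hx ⟨L, hL, hxL⟩
  obtain ⟨C, hC⟩ := hL.isBounded.exists_norm_le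
  have h := hsel x hx ⟨C, fun ω => hC _ (hxL ω)⟩
  have hms : MeasurableSet[G] {ω | (x ω, ω) ∈ D} := (hx.prodMk measurable_id) hD
  rw [ae_iff] at h ⊢
  simp only [not_not] at h ⊢
  rwa [trim_measurableSet_eq hG hms]

/-- Conditional expectations of integrands with an affine integrable minorant are monotone, up to
one null set valid for all points. With `f = g` this contains uniqueness. -/
theorem IsCondNI.ae_le [IsFiniteMeasure μ] (hG : G ≤ mΩ) {f g f' g' : Strat T nn → Ω → EReal}
    {q : Ω → Strat T nn} {m : Ω → ℝ} (hq : Integrable q μ) (hm : Integrable m μ)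
    (hlb : ∀ᵐ ω ∂μ, ∀ x, ((sdot x (q ω) - m ω : ℝ) : EReal) ≤ f x ω)
    (hfg : ∀ᵐ ω ∂μ, ∀ x, f x ω ≤ g x ω)
    (hf : IsCondNI μ G f f') (hg : IsCondNI μ G g g') :
    ∀ᵐ ω ∂μ, ∀ x, f' x ω ≤ g' x ω := by
  have hlb' : ∀ᵐ ω ∂μ, ∀ x, ((sdot x (q ω) - m ω : ℝ) : EReal) ≤ g x ω := by
    filter_upwards [hlb, hfg] with ω h1 h2 x using (h1 x).trans (h2 x)
  have := ae_forall_notMem_of_bounded_selections (μ := μ) hG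
    (D := {z | g' z.1 z.2 < f' z.1 z.2}) (measurableSet_lt hg.1.1 hf.1.1) ?_
  · filter_upwards [this] with ω h x
    exact not_lt.1 (h x)
  intro x hx hC
  have hx' : Measurable x := hx.mono hG le_rfl
  have n1 := lintegral_neg_comp_ne_top hq hm hlb hx' hC
  have n2 := lintegral_neg_comp_ne_top hq hm hlb' hx' hC
  have c1 := hf.2 x hx (Or.inr n1)
  have c2 := hg.2 x hx (Or.inr n2)
  filter_upwards [ae_le_of_forall_EInt_le hG c1.1 c2.1 (c1.neg_ne_top hG n1)
    (c2.neg_ne_top hG n2) fun A hA => by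
      rw [c1.indicator hA, c2.indicator hA]
      refine EInt_mono (hfg.mono fun ω h => ?_)
      exact mul_le_mul_of_nonneg_left (h _)
        (by exact_mod_cast Set.indicator_nonneg (fun _ _ => zero_le_one) ω)] with ω h
  exact not_lt.2 h

theorem isCondNI_neg_coe (hG : G ≤ mΩ) [IsFiniteMeasure μ] {m : Ω → ℝ} (hm : Integrable m μ) :
    IsCondNI μ G (fun (_ : Strat T nn) ω => ((-m ω : ℝ) : EReal))
      (fun _ ω => ((-(μ[m|G]) ω : ℝ) : EReal)) := by
  have hmeas : Measurable[G] (μ[m|G]) := stronglyMeasurable_condExp.measurable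
  refine ⟨⟨?_, fun ω => lowerSemicontinuous_const, fun _ _ => EReal.coe_ne_bot _⟩, fun x hx _ =>
    ⟨hmeas.neg.coe_real_ereal, fun α hα h0 ⟨C, hC⟩ => ?_⟩⟩
  · exact (hmeas.neg.coe_real_ereal).comp measurable_snd
  · have hα' : StronglyMeasurable[G] α := hα.stronglyMeasurable
    have hb : ∀ ω, ‖α ω‖ ≤ C := fun ω => by rw [Real.norm_of_nonneg (h0 ω)]; exact hC ω
    have i1 : Integrable (fun ω => α ω * -m ω) μ :=
      hm.neg.bdd_mul (hα'.mono hG).aestronglyMeasurable (Filter.Eventually.of_forall hb)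
    have i2 : Integrable (fun ω => α ω * -(μ[m|G]) ω) μ :=
      integrable_condExp.neg.bdd_mul (hα'.mono hG).aestronglyMeasurable
        (Filter.Eventually.of_forall hb)
    simp only [← EReal.coe_mul]
    rw [EInt_coe i1, EInt_coe i2]
    congr 1
    have i3 : Integrable (fun ω => α ω * m ω) μ :=
      hm.bdd_mul (hα'.mono hG).aestronglyMeasurable (Filter.Eventually.of_forall hb)
    have h1 := condExp_mul_of_stronglyMeasurable_left hα' i3 hm
    have h2 := integral_condExp (μ := μ) (f := fun ω => α ω * m ω) hG
    simp only [mul_neg, integral_neg]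
    rw [← h2]
    congr 1
    exact (integral_congr_ae h1).symm

/-- An integrable random lower bound of an integrand passes to its conditional expectation. -/
theorem IsCondNI.ae_lower_bound [IsFiniteMeasure μ] (hG : G ≤ mΩ) {g g' : Strat T nn → Ω → EReal}
    {m : Ω → ℝ} (hm : Integrable m μ) (hlb : ∀ᵐ ω ∂μ, ∀ x, ((-m ω : ℝ) : EReal) ≤ g x ω)
    (hc : IsCondNI μ G g g') :
    ∀ᵐ ω ∂μ, ∀ x, ((-(μ[m|G]) ω : ℝ) : EReal) ≤ g' x ω :=
  IsCondNI.ae_le hG (q := fun _ => 0) (integrable_zero _ _ _) hm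
    (Filter.Eventually.of_forall fun ω x => by rw [sdot_zero_right, zero_sub]) hlb
    (isCondNI_neg_coe hG hm) hc

end Comparison

/-! ### Conditional expectations of elements of the annihilator of the adapted processes -/

section Tilt

variable {T : ℕ} {nn : ℕ → ℕ} {mΩ : MeasurableSpace Ω}

/-- The strategy-valued process `(E_t r_0, …, E_t r_{t-1}, 0, …, 0)`. For `r ∈ N^⊥` one has
`E_t r_t = 0`, so this is the vector `E_t r^t` padded by zeros; making the component of index `t`
vanish everywhere, and not just almost surely, turns the Bellman recursion for tilted integrands
into a pointwise identity. -/
def condr (μ : Measure Ω) (𝓕 : ℕ → MeasurableSpace Ω) (r : Ω → Strat T nn) (t : ℕ)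
    (ω : Ω) : Strat T nn :=
  fun s => if s.1 < t then (μ[fun ω' => r ω' s|𝓕 t]) ω else 0

variable {μ : Measure Ω} {𝓕 : ℕ → MeasurableSpace Ω} {r : Ω → Strat T nn}

theorem sdot_condr_congr {t : ℕ} {x y : Strat T nn} (h : ∀ s : Fin (T + 1), s.1 < t → x s = y s)
    (ω : Ω) : sdot x (condr μ 𝓕 r t ω) = sdot y (condr μ 𝓕 r t ω) := by
  refine Finset.sum_congr rfl fun s _ => ?_
  by_cases hs : s.1 < t
  · rw [h s hs]
  · simp [condr, hs]

theorem sdot_update_condr {t : ℕ} (ht : t < T + 1) (x : Strat T nn)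
    (ξ : EuclideanSpace ℝ (Fin (nn t))) (ω : Ω) :
    sdot (Function.update x ⟨t, ht⟩ ξ) (condr μ 𝓕 r t ω) = sdot x (condr μ 𝓕 r t ω) := by
  refine sdot_condr_congr (fun s hs => ?_) ω
  have hne : s ≠ ⟨t, ht⟩ := fun h => by
    rw [h] at hs
    exact lt_irrefl _ hs
  exact Function.update_of_ne hne _ _

theorem measurable_condr (t : ℕ) : Measurable[𝓕 t] (condr μ 𝓕 r t) := by
  refine @measurable_pi_lambda _ _ _ (𝓕 t) _ _ fun s => ?_
  unfold condr
  split_ifs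
  · exact stronglyMeasurable_condExp.measurable
  · exact measurable_const

theorem integrable_condr (t : ℕ) : Integrable (condr μ 𝓕 r t) μ := by
  refine Integrable.of_eval fun s => ?_
  unfold condr
  split_ifs
  · exact integrable_condExp
  · exact integrable_zero _ _ _

theorem sdot_update_zero (s : Fin (T + 1)) (v : EuclideanSpace ℝ (Fin (nn s.1)))
    (w : Strat T nn) : sdot (Function.update (0 : Strat T nn) s v) w = ⟪v, w s⟫ := by
  unfold sdot
  rw [Finset.sum_eq_single s]
  · simp
  · intro b _ hb
    simp [Function.update_of_ne hb]
  · simp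

theorem InNperp.neg (hr : InNperp μ T nn 𝓕 r) : InNperp μ T nn 𝓕 (fun ω => -r ω) :=
  ⟨hr.1.neg, fun x hx hC => by
    simp only [sdot_neg_right, integral_neg, hr.2 x hx hC, neg_zero]⟩

/-- Each component of `r ∈ N^⊥` is orthogonal to the bounded `F_s`-measurable vectors. -/
theorem InNperp.integral_inner (hr : InNperp μ T nn 𝓕 r) (s : Fin (T + 1))
    {v : Ω → EuclideanSpace ℝ (Fin (nn s.1))} (hv : Measurable[𝓕 s.1] v)
    (hC : ∃ C, ∀ ω, ‖v ω‖ ≤ C) : ∫ ω, ⟪v ω, r ω s⟫ ∂μ = 0 := by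
  have := hr.2 (fun ω => Function.update (0 : Strat T nn) s (v ω)) ?_ ?_
  · simpa only [sdot_update_zero] using this
  · intro s'
    by_cases h : s' = s
    · subst h
      simpa using hv
    · simp only [Function.update_of_ne h]
      exact measurable_const
  · obtain ⟨C, hC⟩ := hC
    refine ⟨max C 0, fun ω => (pi_norm_le_iff_of_nonneg (le_max_right _ _)).2 fun s' => ?_⟩
    by_cases h : s' = s
    · subst h
      simpa using Or.inl (hC ω)
    · simp [Function.update_of_ne h]

theorem integral_inner_condExp [IsFiniteMeasure μ] {G : MeasurableSpace Ω} (hG : G ≤ mΩ) {d : ℕ}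
    {v f : Ω → EuclideanSpace ℝ (Fin d)} (hv : Measurable[G] v) (hC : ∃ C, ∀ ω, ‖v ω‖ ≤ C)
    (hf : Integrable f μ) : ∫ ω, ⟪v ω, (μ[f|G]) ω⟫ ∂μ = ∫ ω, ⟪v ω, f ω⟫ ∂μ := by
  have hv' : StronglyMeasurable[G] v := hv.stronglyMeasurable
  obtain ⟨C, hC⟩ := hC
  have hint : Integrable (fun ω => innerSL ℝ (v ω) (f ω)) μ := by
    refine Integrable.mono' (hf.norm.const_mul C)
      ((hv'.mono hG).aestronglyMeasurable.inner hf.1) (Filter.Eventually.of_forall fun ω => ?_)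
    exact (norm_inner_le_norm _ _).trans (mul_le_mul_of_nonneg_right (hC ω) (norm_nonneg _))
  have h1 := condExp_bilin_of_stronglyMeasurable_left (innerSL ℝ) hv' hint hf
  have h2 := integral_condExp (μ := μ) (f := fun ω => innerSL ℝ (v ω) (f ω)) hG
  rw [integral_congr_ae h1] at h2
  exact h2

theorem integrable_inner_of_bounded {d : ℕ} {v f : Ω → EuclideanSpace ℝ (Fin d)}
    (hv : Measurable v) (hC : ∃ C, ∀ ω, ‖v ω‖ ≤ C) (hf : Integrable f μ) :
    Integrable (fun ω => ⟪v ω, f ω⟫) μ := by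
  obtain ⟨C, hC⟩ := hC
  refine Integrable.mono' (hf.norm.const_mul C)
    (hv.aestronglyMeasurable.inner hf.1) (Filter.Eventually.of_forall fun ω => ?_)
  exact (norm_inner_le_norm _ _).trans (mul_le_mul_of_nonneg_right (hC ω) (norm_nonneg _))

/-- For `F_t`-measurable strategies the components of `r ∈ N^⊥` of index at least `t` drop out. -/
theorem integral_sdot_nperp (hle : ∀ t, 𝓕 t ≤ mΩ) (hmono : ∀ s t, s ≤ t → 𝓕 s ≤ 𝓕 t)
    (hr : InNperp μ T nn 𝓕 r) {t : ℕ} {x : Ω → Strat T nn} (hx : Measurable[𝓕 t] x)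
    (hC : ∃ C, ∀ ω, ‖x ω‖ ≤ C) :
    ∫ ω, sdot (x ω) (r ω) ∂μ =
      ∑ s : Fin (T + 1), if s.1 < t then ∫ ω, ⟪x ω s, r ω s⟫ ∂μ else 0 := by
  obtain ⟨C, hC⟩ := hC
  have hxs : ∀ s, Measurable[𝓕 t] fun ω => x ω s := fun s => (measurable_pi_apply s).comp hx
  have hCs : ∀ s, ∃ C, ∀ ω, ‖x ω s‖ ≤ C := fun s => ⟨C, fun ω => (norm_le_pi_norm _ s).trans (hC ω)⟩
  unfold sdot
  rw [integral_finsetSum _ fun s _ => integrable_inner_of_bounded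
    ((hxs s).mono (hle t) le_rfl) (hCs s) (hr.1.eval s)]
  refine Finset.sum_congr rfl fun s _ => ?_
  split_ifs with hs
  · rfl
  · exact hr.integral_inner s ((hxs s).mono (hmono t s (not_lt.1 hs)) le_rfl) (hCs s)

section
variable [IsFiniteMeasure μ]

/-- The right-hand side does not depend on `u ≥ t`: this is the tower property of the vectors
`E_u r^u`. -/
theorem integral_sdot_condr (hle : ∀ t, 𝓕 t ≤ mΩ) (hmono : ∀ s t, s ≤ t → 𝓕 s ≤ 𝓕 t)
    (hr : InNperp μ T nn 𝓕 r) {t u : ℕ} (htu : t ≤ u) {x : Ω → Strat T nn}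
    (hx : Measurable[𝓕 t] x) (hC : ∃ C, ∀ ω, ‖x ω‖ ≤ C) :
    ∫ ω, sdot (x ω) (condr μ 𝓕 r u ω) ∂μ =
      ∑ s : Fin (T + 1), if s.1 < t then ∫ ω, ⟪x ω s, r ω s⟫ ∂μ else 0 := by
  obtain ⟨C, hC⟩ := hC
  have hxs : ∀ s, Measurable[𝓕 t] fun ω => x ω s := fun s => (measurable_pi_apply s).comp hx
  have hCs : ∀ s, ∃ C, ∀ ω, ‖x ω s‖ ≤ C := fun s => ⟨C, fun ω => (norm_le_pi_norm _ s).trans (hC ω)⟩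
  unfold sdot
  rw [integral_finsetSum _ fun s _ => integrable_inner_of_bounded
    ((hxs s).mono (hle t) le_rfl) (hCs s) ((integrable_condr (r := r) (𝓕 := 𝓕) u).eval s)]
  refine Finset.sum_congr rfl fun s _ => ?_
  by_cases hsu : s.1 < u
  · simp only [condr, hsu, if_true]
    rw [integral_inner_condExp (hle u) ((hxs s).mono (hmono t u htu) le_rfl) (hCs s) (hr.1.eval s)]
    split_ifs with hs
    · rfl
    · exact hr.integral_inner s ((hxs s).mono (hmono t s (not_lt.1 hs)) le_rfl) (hCs s)
  · have : ¬ s.1 < t := fun h => hsu (h.trans_le htu)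
    simp [condr, hsu, this]

theorem isCondVec_top (hle : ∀ t, 𝓕 t ≤ mΩ) (hmono : ∀ s t, s ≤ t → 𝓕 s ≤ 𝓕 t)
    (hr : InNperp μ T nn 𝓕 r) (t : ℕ) : IsCondVec μ (𝓕 t) r (condr μ 𝓕 r t) :=
  ⟨measurable_condr t, hr.1, integrable_condr t, fun x hx hC => by
    rw [integral_sdot_nperp hle hmono hr hx hC, integral_sdot_condr hle hmono hr le_rfl hx hC]⟩

theorem isCondVec_succ (hle : ∀ t, 𝓕 t ≤ mΩ) (hmono : ∀ s t, s ≤ t → 𝓕 s ≤ 𝓕 t)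
    (hr : InNperp μ T nn 𝓕 r) (t : ℕ) :
    IsCondVec μ (𝓕 t) (condr μ 𝓕 r (t + 1)) (condr μ 𝓕 r t) :=
  ⟨measurable_condr t, integrable_condr _, integrable_condr t, fun x hx hC => by
    rw [integral_sdot_condr hle hmono hr (Nat.le_succ t) hx hC,
      integral_sdot_condr hle hmono hr le_rfl hx hC]⟩

/-- `E_s r_s = 0` for `r ∈ N^⊥`. -/
theorem InNperp.condExp_eq_zero (hle : ∀ t, 𝓕 t ≤ mΩ) (hr : InNperp μ T nn 𝓕 r)
    (s : Fin (T + 1)) : ∀ᵐ ω ∂μ, (μ[fun ω' => r ω' s|𝓕 s.1]) ω = 0 := by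
  have := ae_eq_condExp_of_forall_setIntegral_eq (μ := μ) (hle s.1) (f := fun ω' => r ω' s)
    (g := fun _ => 0) (hr.1.eval s) (fun _ _ _ => integrable_zero _ _ _) (fun A hA _ => ?_)
    aestronglyMeasurable_const
  · filter_upwards [this] with ω h using h.symm
  rw [integral_zero]
  refine (ext_inner_left ℝ fun c => ?_)
  rw [inner_zero_right, ← _root_.integral_inner ((hr.1.eval s).integrableOn),
    ← integral_indicator (hle _ _ hA)]
  have := hr.integral_inner s (v := A.indicator fun _ => c) (measurable_const.indicator hA)
    ⟨‖c‖, fun ω => norm_indicator_le_norm_self _ _⟩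
  rw [← this]
  congr 1
  ext ω
  by_cases h : ω ∈ A <;> simp [h]

/-- Restoring the component of index `t` omitted in `condr` changes nothing almost surely. -/
theorem InNperp.sdot_condr_eq (hle : ∀ t, 𝓕 t ≤ mΩ) (hr : InNperp μ T nn 𝓕 r) {t : ℕ}
    (ht : t ≤ T) : ∀ᵐ ω ∂μ, ∀ x : Strat T nn, sdot x (condr μ 𝓕 r t ω) =
      ∑ s : Fin (T + 1), if s.1 ≤ t then ⟪x s, (μ[fun ω' => r ω' s|𝓕 t]) ω⟫ else 0 := by
  filter_upwards [hr.condExp_eq_zero hle ⟨t, Nat.lt_succ_of_le ht⟩] with ω hω x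
  refine Finset.sum_congr rfl fun s _ => ?_
  unfold condr
  rcases lt_trichotomy s.1 t with h | h | h
  · simp [h, h.le]
  · obtain rfl : s = ⟨t, Nat.lt_succ_of_le ht⟩ := Fin.ext h
    simp [hω]
  · simp [h.not_gt, h.not_ge]

end

end Tilt

/-! ### Bellman equations under tilting -/

section Bellman

variable {T : ℕ} {nn : ℕ → ℕ} {G : MeasurableSpace Ω} {mΩ : MeasurableSpace Ω} {μ : Measure Ω}
  {𝓕 : ℕ → MeasurableSpace Ω} {q r : Ω → Strat T nn} {h : Strat T nn → Ω → EReal}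
  {H H' : ℕ → Strat T nn → Ω → EReal} {m : Ω → ℝ}

theorem iInf_sub_coe {ι : Sort*} (f : ι → EReal) (b : ℝ) :
    ⨅ i, (f i - (b : EReal)) = (⨅ i, f i) - (b : EReal) := by
  refine le_antisymm ?_ (le_iInf fun i => EReal.sub_le_sub (iInf_le _ i) le_rfl)
  rw [EReal.le_sub_iff_add_le (Or.inl (EReal.coe_ne_bot _)) (Or.inl (EReal.coe_ne_top _))]
  refine le_iInf fun i => ?_
  rw [← EReal.le_sub_iff_add_le (Or.inl (EReal.coe_ne_bot _)) (Or.inl (EReal.coe_ne_top _))]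
  exact iInf_le _ i

/-- Minimizing over `x_{t+1}` preserves the minorant, because its slope vanishes in that
coordinate. -/
theorem affine_le_iInf {t : ℕ} (ht : t < T) {m' : Ω → ℝ} {g : Strat T nn → Ω → EReal} {ω : Ω}
    (hω : ∀ x, ((sdot x (condr μ 𝓕 q (t + 1) ω) - m' ω : ℝ) : EReal) ≤ g x ω) (x : Strat T nn) :
    ((sdot x (condr μ 𝓕 q (t + 1) ω) - m' ω : ℝ) : EReal) ≤
      ⨅ ξ : EuclideanSpace ℝ (Fin (nn (t + 1))), g (Function.update x ⟨t + 1, by omega⟩ ξ) ω := by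
  refine le_iInf fun ξ => ?_
  have := hω (Function.update x ⟨t + 1, by omega⟩ ξ)
  rwa [sdot_update_condr] at this

variable [IsFiniteMeasure μ]

/-- The conditional expectation of an integrand with minorant `x·q - m` has minorant
`x·E[q|G] - E[m|G]`: tilt by `q`, use the constant lower bound, and tilt back. -/
theorem IsCondNI.affine_lower_bound (hG : G ≤ mΩ)
    {g g' : Strat T nn → Ω → EReal}
    (hgm : ∀ x, Measurable x → AEMeasurable (fun ω => g (x ω) ω) μ)
    {q q' : Ω → Strat T nn} (hq : IsCondVec μ G q q') (hm : Integrable m μ)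
    (hlb : ∀ᵐ ω ∂μ, ∀ x, ((sdot x (q ω) - m ω : ℝ) : EReal) ≤ g x ω)
    (hc : IsCondNI μ G g g') :
    ∃ m' : Ω → ℝ, Integrable m' μ ∧
      ∀ᵐ ω ∂μ, ∀ x, ((sdot x (q' ω) - m' ω : ℝ) : EReal) ≤ g' x ω := by
  refine ⟨μ[m|G], integrable_condExp, ?_⟩
  have h1 := (hc.shift hG hgm hq.int hm hlb hq).ae_lower_bound hG hm (by
    filter_upwards [hlb] with ω hω x
    rw [EReal_le_sub_iff, ← sub_eq_add_neg]
    exact hω x)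
  filter_upwards [h1] with ω hω x
  have h2 := hω x
  rwa [EReal_le_sub_iff, ← sub_eq_add_neg] at h2

/-- A lower bound `h ≥ x·q - m` with `q ∈ N^⊥` propagates backwards through the Bellman recursion:
`h_t ≥ x^t · E_t q^t - m_t` with `m_t` integrable. -/
theorem IsBellman.lower_bound (hle : ∀ t, 𝓕 t ≤ mΩ) (hmono : ∀ s t, s ≤ t → 𝓕 s ≤ 𝓕 t)
    (hgm : ∀ x, Measurable x → AEMeasurable (fun ω => h (x ω) ω) μ)
    (hq : InNperp μ T nn 𝓕 q) (hm : Integrable m μ)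
    (hlb : ∀ᵐ ω ∂μ, ∀ x, ((sdot x (q ω) - m ω : ℝ) : EReal) ≤ h x ω)
    (hH : IsBellman μ T nn 𝓕 h H) {t : ℕ} (ht : t ≤ T) :
    ∃ m' : Ω → ℝ, Integrable m' μ ∧
      ∀ᵐ ω ∂μ, ∀ x, ((sdot x (condr μ 𝓕 q t ω) - m' ω : ℝ) : EReal) ≤ H t x ω := by
  obtain ⟨-, hT, Ht, hHt⟩ := hH
  refine Nat.decreasingInduction' (P := fun t => ∃ m' : Ω → ℝ, Integrable m' μ ∧
      ∀ᵐ ω ∂μ, ∀ x, ((sdot x (condr μ 𝓕 q t ω) - m' ω : ℝ) : EReal) ≤ H t x ω)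
    (fun k hk _ ih => ?_) ht
    (hT.affine_lower_bound (hle T) hgm (isCondVec_top hle hmono hq T) hm hlb)
  obtain ⟨m', hm', hlb'⟩ := ih
  obtain ⟨hN, hinf, hc⟩ := hHt k hk
  refine hc.affine_lower_bound (hle k) (fun x hx => (hN.comp hx).aemeasurable)
    (isCondVec_succ hle hmono hq k) hm' ?_
  filter_upwards [hlb'] with ω hω x
  rw [hinf]
  exact affine_le_iInf hk hω x

/-- Tilting by `r ∈ N^⊥` maps Bellman solutions of `h` to Bellman solutions of `h - x·r`. The slope
of index `t + 1` vanishes at the coordinate being minimized, so the tilt passes through the infimum. -/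
theorem IsBellman.tilt (hle : ∀ t, 𝓕 t ≤ mΩ) (hmono : ∀ s t, s ≤ t → 𝓕 s ≤ 𝓕 t)
    (hgm : ∀ x, Measurable x → AEMeasurable (fun ω => h (x ω) ω) μ)
    (hq : InNperp μ T nn 𝓕 q) (hm : Integrable m μ)
    (hlb : ∀ᵐ ω ∂μ, ∀ x, ((sdot x (q ω) - m ω : ℝ) : EReal) ≤ h x ω)
    (hr : InNperp μ T nn 𝓕 r) (hH : IsBellman μ T nn 𝓕 h H) :
    IsBellman μ T nn 𝓕 (fun x ω => h x ω - ((sdot x (r ω) : ℝ) : EReal))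
      (fun t x ω => H t x ω - ((sdot x (condr μ 𝓕 r t ω) : ℝ) : EReal)) := by
  have hbd := fun t (ht : t ≤ T) => hH.lower_bound hle hmono hgm hq hm hlb ht
  obtain ⟨hdep, hT, Ht, hHt⟩ := hH
  refine ⟨fun t ht x y ω hxy => ?_,
    hT.shift (hle T) hgm hq.1 hm hlb (isCondVec_top hle hmono hr T),
    fun t x ω => Ht t x ω - ((sdot x (condr μ 𝓕 r (t + 1) ω) : ℝ) : EReal), fun t ht => ?_⟩
  · simp only
    rw [hdep t ht x y ω hxy, sdot_condr_congr fun s hs => hxy s hs.le]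
  obtain ⟨hN, hinf, hc⟩ := hHt t ht
  obtain ⟨m', hm', hlb'⟩ := hbd (t + 1) ht
  refine ⟨hN.shift ((measurable_condr (t + 1)).mono (hle _) le_rfl), fun x ω => ?_,
    hc.shift (hle t) (fun x hx => (hN.comp hx).aemeasurable) (integrable_condr (r := q) (𝓕 := 𝓕) (t + 1)) hm' ?_
      (isCondVec_succ hle hmono hr t)⟩
  · simp only [sdot_update_condr, iInf_sub_coe, hinf]
  · filter_upwards [hlb'] with ω hω x
    rw [hinf]
    exact affine_le_iInf ht hω x

/-- Any Bellman solution lies below any other, by backward induction. -/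
theorem IsBellman.ae_le (hle : ∀ t, 𝓕 t ≤ mΩ) (hmono : ∀ s t, s ≤ t → 𝓕 s ≤ 𝓕 t)
    (hgm : ∀ x, Measurable x → AEMeasurable (fun ω => h (x ω) ω) μ)
    (hq : InNperp μ T nn 𝓕 q) (hm : Integrable m μ)
    (hlb : ∀ᵐ ω ∂μ, ∀ x, ((sdot x (q ω) - m ω : ℝ) : EReal) ≤ h x ω)
    (hH : IsBellman μ T nn 𝓕 h H) (hH' : IsBellman μ T nn 𝓕 h H') {t : ℕ} (ht : t ≤ T) :
    ∀ᵐ ω ∂μ, ∀ x, H t x ω ≤ H' t x ω := by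
  have hbd := fun t (ht : t ≤ T) => hH.lower_bound hle hmono hgm hq hm hlb ht
  obtain ⟨-, hT, Ht, hHt⟩ := hH
  obtain ⟨-, hT', Ht', hHt'⟩ := hH'
  refine Nat.decreasingInduction' (P := fun t => ∀ᵐ ω ∂μ, ∀ x, H t x ω ≤ H' t x ω)
    (fun k hk _ ih => ?_) ht
    (hT.ae_le (hle T) hq.1 hm hlb (Filter.Eventually.of_forall fun _ _ => le_rfl) hT')
  obtain ⟨hN, hinf, hc⟩ := hHt k hk
  obtain ⟨hN', hinf', hc'⟩ := hHt' k hk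
  obtain ⟨m', hm', hlb'⟩ := hbd (k + 1) hk
  refine hc.ae_le (hle k) (integrable_condr (r := q) (𝓕 := 𝓕) (k + 1)) hm' ?_ ?_ hc'
  · filter_upwards [hlb'] with ω hω x
    rw [hinf]
    exact affine_le_iInf hk hω x
  · filter_upwards [ih] with ω hω x
    rw [hinf, hinf']
    exact iInf_mono fun ξ => hω _

theorem IsBellman.ae_eq (hle : ∀ t, 𝓕 t ≤ mΩ) (hmono : ∀ s t, s ≤ t → 𝓕 s ≤ 𝓕 t)
    (hgm : ∀ x, Measurable x → AEMeasurable (fun ω => h (x ω) ω) μ)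
    (hq : InNperp μ T nn 𝓕 q) (hm : Integrable m μ)
    (hlb : ∀ᵐ ω ∂μ, ∀ x, ((sdot x (q ω) - m ω : ℝ) : EReal) ≤ h x ω)
    (hH : IsBellman μ T nn 𝓕 h H) (hH' : IsBellman μ T nn 𝓕 h H') {t : ℕ} (ht : t ≤ T) :
    ∀ᵐ ω ∂μ, ∀ x, H t x ω = H' t x ω := by
  filter_upwards [hH.ae_le hle hmono hgm hq hm hlb hH' ht,
    hH'.ae_le hle hmono hgm hq hm hlb hH ht] with ω h1 h2 x using le_antisymm (h1 x) (h2 x)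

end Bellman

/-! ### Existence, uniqueness and the relation between the two solutions -/

/-- Lemma 4.4: for `p ∈ N^⊥` such that `k := h - x·p` is lower
bounded, the Bellman equations have a solution for `h` iff they have one for `k`; in
that case the solutions are unique and related by
`k_t(x^t,ω) = h_t(x^t,ω) - x^t · (E_t p^t)(ω)`. -/
theorem statement13 {Ω : Type*} {mΩ : MeasurableSpace Ω} (μ : Measure Ω)
    [IsProbabilityMeasure μ] (hcompl : μ.IsComplete)
    (T : ℕ) (nn : ℕ → ℕ) (𝓕 : ℕ → MeasurableSpace Ω)
    (hle : ∀ t, 𝓕 t ≤ mΩ) (hmono : ∀ s t, s ≤ t → 𝓕 s ≤ 𝓕 t)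
    (h : Strat T nn → Ω → EReal) (hNI : IsNormalIntegrand mΩ h)
    (p : Ω → Strat T nn) (hp : InNperp μ T nn 𝓕 p)
    (m : Ω → ℝ) (hm : Integrable m μ)
    (hklb : ∀ᵐ ω ∂μ, ∀ x : Strat T nn,
      ((-(m ω) : ℝ) : EReal) ≤ h x ω - ((sdot x (p ω) : ℝ) : EReal)) :
    ((∃ H, IsBellman μ T nn 𝓕 h H) ↔
      (∃ K, IsBellman μ T nn 𝓕 (fun x ω => h x ω - ((sdot x (p ω) : ℝ) : EReal)) K)) ∧
    (∀ H H', IsBellman μ T nn 𝓕 h H → IsBellman μ T nn 𝓕 h H' →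
      ∀ t ≤ T, ∀ᵐ ω ∂μ, ∀ x, H t x ω = H' t x ω) ∧
    (∀ K K', IsBellman μ T nn 𝓕 (fun x ω => h x ω - ((sdot x (p ω) : ℝ) : EReal)) K →
      IsBellman μ T nn 𝓕 (fun x ω => h x ω - ((sdot x (p ω) : ℝ) : EReal)) K' →
      ∀ t ≤ T, ∀ᵐ ω ∂μ, ∀ x, K t x ω = K' t x ω) ∧
    (∀ H K, IsBellman μ T nn 𝓕 h H →
      IsBellman μ T nn 𝓕 (fun x ω => h x ω - ((sdot x (p ω) : ℝ) : EReal)) K →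
      ∀ t ≤ T, ∀ᵐ ω ∂μ, ∀ x : Strat T nn,
        K t x ω = H t x ω -
          ((∑ s : Fin (T + 1), if s.1 ≤ t then ⟪x s, (μ[fun ω' => p ω' s|𝓕 t]) ω⟫ else 0
            : ℝ) : EReal)) := by
  have hgm : ∀ x, Measurable x → AEMeasurable (fun ω => h (x ω) ω) μ :=
    fun x hx => (hNI.comp hx).aemeasurable
  have hlb : ∀ᵐ ω ∂μ, ∀ x, ((sdot x (p ω) - m ω : ℝ) : EReal) ≤ h x ω := by
    filter_upwards [hklb] with ω hω x
    have := hω x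
    rwa [EReal_le_sub_iff, ← sub_eq_add_neg] at this
  have hkm : ∀ x, Measurable x →
      AEMeasurable (fun ω => h (x ω) ω - ((sdot (x ω) (p ω) : ℝ) : EReal)) μ := fun x hx => by
    simp only [sub_eq_add_neg]
    exact (hgm x hx).add (aemeasurable_sdot hx hp.1.1.aemeasurable).coe_real_ereal.neg
  have h0 : InNperp μ T nn 𝓕 (fun _ => (0 : Strat T nn)) :=
    ⟨integrable_zero _ _ _, fun x _ _ => by simp only [sdot_zero_right, integral_zero]⟩
  have hklb' : ∀ᵐ ω ∂μ, ∀ x : Strat T nn, ((sdot x 0 - m ω : ℝ) : EReal) ≤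
      h x ω - ((sdot x (p ω) : ℝ) : EReal) := by
    filter_upwards [hklb] with ω hω x
    rw [sdot_zero_right, zero_sub]
    exact hω x
  refine ⟨⟨fun ⟨H, hH⟩ => ⟨_, hH.tilt hle hmono hgm hp hm hlb hp⟩, fun ⟨K, hK⟩ => ?_⟩,
    fun H H' hH hH' t ht => hH.ae_eq hle hmono hgm hp hm hlb hH' ht,
    fun K K' hK hK' t ht => hK.ae_eq hle hmono hkm h0 hm hklb' hK' ht,
    fun H K hH hK t ht => ?_⟩
  · have hK' := hK.tilt hle hmono hkm h0 hm hklb' hp.neg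
    simp only [sdot_neg_right, EReal_sub_sub_neg] at hK'
    exact ⟨_, hK'⟩
  · have hH' := hH.tilt hle hmono hgm hp hm hlb hp
    filter_upwards [hK.ae_eq hle hmono hkm h0 hm hklb' hH' ht, hp.sdot_condr_eq hle ht]
      with ω h1 h2 x
    rw [h1 x, h2 x]

end PaperDP
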